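/- arXiv:1911.12283 — 4 statements merged into one kernel-verified Lean document; each statement's English description precedes it below -/
import Mathlib

section
/- Let p be an odd prime, 𝔽 an algebraically closed field of characteristic p, W₀ = W(𝔽), K₀ = Frac(W₀), and (V, Q) a finite-dimensional nondegenerate quadratic space over K₀. Let M be a W₀-lattice in V with pM ⊆ M^∨ ⊆ M such that the W₀-module M/M^∨ has length 2. Then there exist exactly two self-dual W₀-lattices L with M^∨ ⊆ L ⊆ M. -/
/-!
Statement 8: Let `p` be an odd prime, `𝔽` an algebraically closed field of characteristic `p`,
`W₀ = W(𝔽)` its ring of Witt vectors, `K₀ = Frac W₀`, and `(V, Q)` a finite-dimensional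
nondegenerate quadratic space over `K₀`.  Let `M` be a `W₀`-lattice with `pM ⊆ M^∨ ⊆ M` such
that `M/M^∨` has length 2 over `W₀`.  Then there exist exactly two self-dual `W₀`-lattices `L`
with `M^∨ ⊆ L ⊆ M`.
-/

open QuadraticMap

theorem aux_isotropic {F : Type*} [Field F] [IsAlgClosed F] (h2 : (2 : F) ≠ 0) (a c d : F)
    (h : a * d - c * c ≠ 0) :
    ∃ s₁ t₁ s₂ t₂ : F, a * s₁ * s₁ + 2 * c * s₁ * t₁ + d * t₁ * t₁ = 0 ∧
      a * s₂ * s₂ + 2 * c * s₂ * t₂ + d * t₂ * t₂ = 0 ∧ s₁ * t₂ - s₂ * t₁ ≠ 0 := by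
  by_cases ha : a = 0
  · subst ha
    have hc : c ≠ 0 := by rintro rfl; simp at h
    refine ⟨1, 0, d, -2 * c, by ring, by ring, ?_⟩
    simpa using ⟨h2, hc⟩
  · obtain ⟨r, hr⟩ := IsAlgClosed.exists_pow_nat_eq (c * c - a * d) (n := 2) (by norm_num)
    have hr0 : r ≠ 0 := by
      rintro rfl
      apply h
      linear_combination hr
    refine ⟨-c + r, a, -c - r, a, by linear_combination a * hr, by linear_combination a * hr, ?_⟩
    have : (-c + r) * a - (-c - r) * a = 2 * (a * r) := by ring
    rw [this]
    exact mul_ne_zero h2 (mul_ne_zero ha hr0)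

theorem aux_cover {R V : Type*} [CommRing R] [AddCommGroup V] [Module R V]
    {A B : Submodule R V} (h : A ⋖ B) :
    ∃ e ∈ B, e ∉ A ∧ ∀ x ∈ B, ∃ d ∈ A, ∃ s : R, x = d + s • e := by
  obtain ⟨e, heB, heA⟩ := SetLike.exists_of_lt h.lt
  refine ⟨e, heB, heA, ?_⟩
  have hlt : A < A ⊔ Submodule.span R {e} := by
    refine lt_of_le_of_ne le_sup_left ?_
    intro hh
    apply heA
    rw [hh]
    exact Submodule.mem_sup_right (Submodule.mem_span_singleton_self e)
  have hle : A ⊔ Submodule.span R {e} ≤ B := by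
    refine sup_le h.le ?_
    simpa using heB
  have heq : A ⊔ Submodule.span R {e} = B := by
    by_contra hne
    exact h.2 hlt (lt_of_le_of_ne hle hne)
  intro x hx
  rw [← heq, Submodule.mem_sup] at hx
  obtain ⟨d, hd, y, hy, rfl⟩ := hx
  obtain ⟨s, rfl⟩ := Submodule.mem_span_singleton.1 hy
  exact ⟨d, hd, s, rfl⟩

theorem aux_core {R F V : Type*} [CommRing R] [Field F] [IsAlgClosed F] (h2 : (2 : F) ≠ 0)
    (res : R →+* F) (hsurj : Function.Surjective res) (π : R) (hπ : ∀ r, res r = 0 → π ∣ r)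
    [AddCommGroup V] [Module R V] (D N M : Submodule R V) (hDN : D ⋖ N) (hNM : N ⋖ M)
    (hpM : ∀ x ∈ M, π • x ∈ D) (c : V → V → F)
    (cadd : ∀ x ∈ M, ∀ y ∈ M, ∀ z ∈ M, c (x + y) z = c x z + c y z)
    (csmul : ∀ r : R, ∀ x ∈ M, ∀ z ∈ M, c (r • x) z = res r * c x z)
    (csymm : ∀ x ∈ M, ∀ y ∈ M, c x y = c y x)
    (hD : ∀ x ∈ M, x ∈ D ↔ ∀ y ∈ M, c x y = 0) :
    ∃ u ∈ M, ∃ v ∈ M, c u u = 0 ∧ c v v = 0 ∧ c u v ≠ 0 ∧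
      ∀ x ∈ M, ∃ d ∈ D, ∃ s t : R, x = d + s • u + t • v := by
  obtain ⟨e, heN, heD, he⟩ := aux_cover hDN
  obtain ⟨f, hfM, hfN, hf⟩ := aux_cover hNM
  have heM : e ∈ M := hNM.le heN
  have hDM : D ≤ M := hDN.le.trans hNM.le
  have hgen : ∀ x ∈ M, ∃ d ∈ D, ∃ s t : R, x = d + s • e + t • f := by
    intro x hx
    obtain ⟨n, hn, t, rfl⟩ := hf x hx
    obtain ⟨d, hd, s, rfl⟩ := he n hn
    exact ⟨d, hd, s, t, rfl⟩
  have hker : ∀ r x, x ∈ M → res r = 0 → r • x ∈ D := by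
    intro r x hx hr
    obtain ⟨k, rfl⟩ := hπ r hr
    rw [mul_comm, mul_smul]
    exact D.smul_mem _ (hpM x hx)
  have hunit : ∀ (P : Submodule R V) r x, D ≤ P → x ∈ M → res r ≠ 0 → r • x ∈ P → x ∈ P := by
    intro P r x hP hx hr h
    obtain ⟨q, hq⟩ := hsurj (res r)⁻¹
    have h0 : res (1 - q * r) = 0 := by
      simp [hq, hr]
    have := P.add_mem (hP (hker _ x hx h0)) (P.smul_mem q h)
    rwa [smul_smul, ← add_smul, sub_add_cancel, one_smul] at this
  have hindep : ∀ s t : R, s • e + t • f ∈ D → res s = 0 ∧ res t = 0 := by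
    intro s t h
    have ht : res t = 0 := by
      by_contra ht
      apply hfN
      refine hunit N t f hDN.le hfM ht ?_
      have := N.sub_mem (hDN.le h) (N.smul_mem s heN)
      simpa using this
    refine ⟨?_, ht⟩
    by_contra hs
    apply heD
    refine hunit D s e le_rfl heM hs ?_
    have := D.sub_mem h (hker t f hfM ht)
    simpa using this
  have cD : ∀ d ∈ D, ∀ y ∈ M, c d y = 0 := fun d hd => (hD d (hDM hd)).1 hd
  have clin : ∀ s t : R, ∀ z ∈ M, c (s • e + t • f) z = res s * c e z + res t * c f z := by
    intro s t z hz
    rw [cadd _ (M.smul_mem _ heM) _ (M.smul_mem _ hfM) z hz, csmul _ _ heM _ hz,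
      csmul _ _ hfM _ hz]
  have hmem : ∀ s t : R, s • e + t • f ∈ M :=
    fun s t => M.add_mem (M.smul_mem _ heM) (M.smul_mem _ hfM)
  have hDcrit : ∀ x ∈ M, c x e = 0 → c x f = 0 → x ∈ D := by
    intro x hx h1 h2
    rw [hD x hx]
    intro y hy
    obtain ⟨d, hd, s, t, rfl⟩ := hgen y hy
    rw [csymm _ hx _ hy, add_assoc, cadd _ (hDM hd) _ (hmem s t) _ hx, cD d hd x hx,
      clin _ _ _ hx, csymm _ heM _ hx, csymm _ hfM _ hx, h1, h2]
    simp
  have hfe : c f e = c e f := csymm _ hfM _ heM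
  have hdet : c e e * c f f - c e f * c e f ≠ 0 := by
    intro h0
    obtain ⟨a, ha⟩ := hsurj (c e e)
    obtain ⟨b, hb⟩ := hsurj (c e f)
    obtain ⟨d, hd⟩ := hsurj (c f f)
    have h1 := hindep b (-a) (hDcrit _ (hmem _ _)
      (by rw [clin _ _ _ heM, map_neg, ha, hb, hfe]; ring)
      (by rw [clin _ _ _ hfM, map_neg, ha, hb]; linear_combination -h0))
    rw [map_neg, ha, hb] at h1
    have h3 : e ∈ D := hDcrit e heM (by simpa using h1.2) h1.1
    exact heD h3
  obtain ⟨s₁, t₁, s₂, t₂, hq1, hq2, hd⟩ := aux_isotropic h2 _ _ _ hdet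
  obtain ⟨S₁, rfl⟩ := hsurj s₁
  obtain ⟨T₁, rfl⟩ := hsurj t₁
  obtain ⟨S₂, rfl⟩ := hsurj s₂
  obtain ⟨T₂, rfl⟩ := hsurj t₂
  have clin2 : ∀ s t s' t' : R, c (s • e + t • f) (s' • e + t' • f) =
      res s * (res s' * c e e + res t' * c e f) + res t * (res s' * c e f + res t' * c f f) := by
    intro s t s' t'
    rw [clin _ _ _ (hmem _ _), csymm _ heM _ (hmem _ _), csymm _ hfM _ (hmem _ _),
      clin _ _ _ heM, clin _ _ _ hfM, hfe]
  obtain ⟨δ, hδ⟩ := hsurj (res S₁ * res T₂ - res S₂ * res T₁)⁻¹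
  refine ⟨S₁ • e + T₁ • f, hmem _ _, S₂ • e + T₂ • f, hmem _ _, ?_, ?_, ?_, ?_⟩
  · rw [clin2]; linear_combination hq1
  · rw [clin2]; linear_combination hq2
  · rw [clin2]
    intro h0
    have key : (res S₁ * res T₂ - res S₂ * res T₁) ^ 2 *
        (c e e * c f f - c e f * c e f) = 0 := by
      linear_combination (c e e * res S₂ * res S₂ + 2 * c e f * res S₂ * res T₂
        + c f f * res T₂ * res T₂) * hq1 - (res S₁ * (res S₂ * c e e + res T₂ * c e f) +
        res T₁ * (res S₂ * c e f + res T₂ * c f f)) * h0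
    exact mul_ne_zero (pow_ne_zero 2 hd) hdet key
  · intro x hx
    obtain ⟨d, hdD, s, t, rfl⟩ := hgen x hx
    have h0 : res (1 - δ * (S₁ * T₂ - S₂ * T₁)) = 0 := by
      simp [hδ, hd]
    refine ⟨d + (1 - δ * (S₁ * T₂ - S₂ * T₁)) • (s • e + t • f),
      D.add_mem hdD (hker _ _ (hmem _ _) h0), δ * (s * T₂ - t * S₂), δ * (t * S₁ - s * T₁), ?_⟩
    module

theorem aux_double {R K V : Type*} [CommRing R] [IsDomain R] [IsPrincipalIdealRing R]
    [Field K] [Algebra R K] [IsFractionRing R K] [AddCommGroup V] [Module R V] [Module K V]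
    [IsScalarTower R K V] (B : LinearMap.BilinForm K V) (hB : B.Nondegenerate) (hs : B.IsSymm)
    (M : Submodule R V) (hfg : M.FG) (hspan : Submodule.span K (M : Set V) = ⊤) :
    B.dualSubmodule (B.dualSubmodule M) = M := by
  have : Submodule.IsLattice K M := ⟨hfg, hspan⟩
  have hf : FaithfulSMul R K := inferInstance
  have : Module.IsTorsionFree R K := inferInstance
  have : Module.IsTorsionFree R V := Module.IsTorsionFree.trans_faithfulSMul R K V
  have : Module.Finite R M := inferInstance
  obtain ⟨n, b⟩ := Module.basisOfFiniteTypeTorsionFree' (R := R) (M := M)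
  have h := B.dualSubmodule_dualSubmodule_of_basis (R := R) hB hs (b.extendOfIsLattice K)
  have h2 : Submodule.span R (Set.range (b.extendOfIsLattice K)) = M := by
    have : Set.range (b.extendOfIsLattice K) = M.subtype '' Set.range b := by
      rw [← Set.range_comp]
      congr 1
      ext i
      simp
    rw [this, ← Submodule.map_span, b.span_eq, Submodule.map_top, Submodule.range_subtype]
  rwa [h2] at h

theorem aux_main {R F K V : Type*} [CommRing R] [IsDomain R] [IsPrincipalIdealRing R]
    [Field F] [IsAlgClosed F] (h2 : (2 : F) ≠ 0)
    (res : R →+* F) (hsurj : Function.Surjective res) (π : R) (hπ0 : π ≠ 0)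
    (hπ : ∀ r, res r = 0 ↔ π ∣ r)
    [Field K] [Algebra R K] [IsFractionRing R K] [AddCommGroup V] [Module R V] [Module K V]
    [IsScalarTower R K V] (B : LinearMap.BilinForm K V) (hB : B.Nondegenerate) (hs : B.IsSymm)
    (M N : Submodule R V) (hfg : M.FG) (hspan : Submodule.span K (M : Set V) = ⊤)
    (hpM : ∀ x ∈ M, π • x ∈ B.dualSubmodule M)
    (hDN : B.dualSubmodule M ⋖ N) (hNM : N ⋖ M) :
    ∃ L₁ L₂ : Submodule R V, L₁ ≠ L₂ ∧ ∀ L : Submodule R V,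
      ((L.FG ∧ Submodule.span K (L : Set V) = ⊤) ∧ B.dualSubmodule L = L ∧
        B.dualSubmodule M ≤ L ∧ L ≤ M) ↔ (L = L₁ ∨ L = L₂) := by
  have hDM : B.dualSubmodule M ≤ M := hDN.le.trans hNM.le
  have hinj : Function.Injective (algebraMap R K) := IsFractionRing.injective R K
  have hsm : ∀ (r : R) (x y : V), B (r • x) y = algebraMap R K r * B x y := by
    intro r x y
    rw [← IsScalarTower.algebraMap_smul K r x]
    rw [map_smul, LinearMap.smul_apply, smul_eq_mul]
  have hsym : ∀ x y, B x y = B y x := fun x y => hs.eq x y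
  have hex : ∀ x y, ∃ r : R, x ∈ M → y ∈ M → algebraMap R K r = algebraMap R K π * B x y := by
    intro x y
    by_cases hx : x ∈ M
    · by_cases hy : y ∈ M
      · obtain ⟨r, hr⟩ := Submodule.mem_one.1 (hpM x hx y hy)
        exact ⟨r, fun _ _ => by rw [hr, hsm]⟩
      · exact ⟨0, fun _ h => absurd h hy⟩
    · exact ⟨0, fun h => absurd h hx⟩
  choose β hβ using hex
  have hπK : algebraMap R K π ≠ 0 := by
    rw [Ne, ← map_zero (algebraMap R K), hinj.eq_iff]; exact hπ0
  have cint : ∀ x ∈ M, ∀ y ∈ M, res (β x y) = 0 ↔ B x y ∈ (1 : Submodule R K) := by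
    intro x hx y hy
    rw [hπ, Submodule.mem_one]
    have h := hβ x y hx hy
    constructor
    · rintro ⟨k, hk⟩
      refine ⟨k, mul_left_cancel₀ hπK ?_⟩
      rw [← h, hk, map_mul]
    · rintro ⟨k, hk⟩
      refine ⟨k, hinj ?_⟩
      rw [h, map_mul, hk]
  have cadd : ∀ x ∈ M, ∀ y ∈ M, ∀ z ∈ M,
      res (β (x + y) z) = res (β x z) + res (β y z) := by
    intro x hx y hy z hz
    rw [← map_add]
    congr 1
    apply hinj
    rw [map_add, hβ _ _ (M.add_mem hx hy) hz, hβ _ _ hx hz, hβ _ _ hy hz, map_add,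
      LinearMap.add_apply, mul_add]
  have csmul : ∀ r : R, ∀ x ∈ M, ∀ z ∈ M, res (β (r • x) z) = res r * res (β x z) := by
    intro r x hx z hz
    rw [← map_mul]
    congr 1
    apply hinj
    rw [map_mul, hβ _ _ (M.smul_mem r hx) hz, hβ _ _ hx hz, hsm]
    ring
  have csymm : ∀ x ∈ M, ∀ y ∈ M, res (β x y) = res (β y x) := by
    intro x hx y hy
    congr 1
    apply hinj
    rw [hβ _ _ hx hy, hβ _ _ hy hx, hsym]
  have hD : ∀ x ∈ M, x ∈ B.dualSubmodule M ↔ ∀ y ∈ M, res (β x y) = 0 := by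
    intro x hx
    rw [LinearMap.BilinForm.mem_dualSubmodule]
    exact forall₂_congr fun y hy => (cint x hx y hy).symm
  obtain ⟨c, hc⟩ : ∃ c : V → V → F, ∀ x y, res (β x y) = c x y := ⟨_, fun _ _ => rfl⟩
  simp only [hc] at cint cadd csmul csymm hD
  clear hc hβ
  have hdd := aux_double B hB hs M hfg hspan
  have hker : ∀ r x, x ∈ M → res r = 0 → r • x ∈ B.dualSubmodule M := by
    intro r x hx hr
    obtain ⟨k, rfl⟩ := (hπ r).1 hr
    rw [mul_comm, mul_smul]
    exact Submodule.smul_mem _ _ (hpM x hx)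
  obtain ⟨u, hu, v, hv, huu, hvv, huv, hgen⟩ := aux_core h2 res hsurj π (fun r => (hπ r).1)
    (B.dualSubmodule M) N M hDN hNM hpM c cadd csmul csymm hD
  generalize hDdef : B.dualSubmodule M = D at *
  have cD : ∀ d ∈ D, ∀ y ∈ M, c d y = 0 := fun d hd => (hD d (hDM hd)).1 hd
  have hmono : ∀ A A' : Submodule R V, A ≤ A' → B.dualSubmodule A' ≤ B.dualSubmodule A :=
    fun A A' h x hx y hy => hx y (h hy)
  -- self-duality of `D + R w` for an isotropic vector `w`
  have hself : ∀ w ∈ M, ∀ w' ∈ M, c w w = 0 → c w w' ≠ 0 →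
      (∀ x ∈ M, ∃ d ∈ D, ∃ s t : R, x = d + s • w + t • w') →
      ((D ⊔ Submodule.span R {w}).FG ∧
        Submodule.span K ((D ⊔ Submodule.span R {w} : Submodule R V) : Set V) = ⊤) ∧
        B.dualSubmodule (D ⊔ Submodule.span R {w}) = D ⊔ Submodule.span R {w} ∧
        D ≤ D ⊔ Submodule.span R {w} ∧ D ⊔ Submodule.span R {w} ≤ M := by
    intro w hw w' hw' hww hww' hg
    have hLM : D ⊔ Submodule.span R {w} ≤ M := sup_le hDM (by simpa using hw)
    have hwL : w ∈ D ⊔ Submodule.span R {w} :=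
      Submodule.mem_sup_right (Submodule.mem_span_singleton_self w)
    refine ⟨⟨?_, ?_⟩, ?_, le_sup_left, hLM⟩
    · have : IsNoetherian R M := isNoetherian_of_fg_of_noetherian M hfg
      exact Submodule.FG.of_le hfg hLM
    · rw [eq_top_iff, ← hspan, Submodule.span_le]
      intro x hx
      have h1 : π • x ∈ Submodule.span K
          ((D ⊔ Submodule.span R {w} : Submodule R V) : Set V) :=
        Submodule.subset_span (Submodule.mem_sup_left (hpM x hx))
      rw [← IsScalarTower.algebraMap_smul K π x] at h1
      exact (Submodule.smul_mem_iff _ hπK).1 h1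
    · have hclin : ∀ d ∈ D, ∀ s : R, ∀ z ∈ M, c (d + s • w) z = res s * c w z := by
        intro d hd s z hz
        rw [cadd _ (hDM hd) _ (M.smul_mem _ hw) _ hz, cD d hd z hz, csmul _ _ hw _ hz, zero_add]
      have hmemL : ∀ x ∈ D ⊔ Submodule.span R {w}, ∃ d ∈ D, ∃ s : R, x = d + s • w := by
        intro x hx
        obtain ⟨d, hd, y, hy, rfl⟩ := Submodule.mem_sup.1 hx
        obtain ⟨s, rfl⟩ := Submodule.mem_span_singleton.1 hy
        exact ⟨d, hd, s, rfl⟩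
      apply le_antisymm
      · intro x hx
        have hxM : x ∈ M := by
          rw [← hdd]
          exact hmono _ _ le_sup_left hx
        have hxw := (cint x hxM w hw).2 (hx w hwL)
        obtain ⟨d, hd, s, t, rfl⟩ := hg x hxM
        have hm : d + s • w ∈ M := M.add_mem (hDM hd) (M.smul_mem _ hw)
        rw [cadd _ hm _ (M.smul_mem _ hw') _ hw, hclin d hd s w hw, csmul _ _ hw' _ hw, hww,
          mul_zero, zero_add, csymm _ hw' _ hw] at hxw
        have ht := (mul_eq_zero.1 hxw).resolve_right hww'
        have := Submodule.mem_sup_left (T := Submodule.span R {w}) (D.add_mem hd (hker t w' hw' ht))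
        have h3 := Submodule.add_mem _ this (Submodule.smul_mem _ s hwL)
        convert h3 using 1
        abel
      · intro x hx y hy
        rw [← cint x (hLM hx) y (hLM hy)]
        obtain ⟨d, hd, s, rfl⟩ := hmemL x hx
        rw [hclin d hd s y (hLM hy), csymm _ hw _ (hLM hy)]
        obtain ⟨d', hd', s', rfl⟩ := hmemL y hy
        rw [hclin d' hd' s' w hw, hww]
        simp
  have h1 := hself u hu v hv huu huv hgen
  have h2' := hself v hv u hu hvv (by rwa [csymm _ hv _ hu]) (by
    intro x hx
    obtain ⟨d, hd, s, t, rfl⟩ := hgen x hx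
    exact ⟨d, hd, t, s, by abel⟩)
  refine ⟨D ⊔ Submodule.span R {u}, D ⊔ Submodule.span R {v}, ?_, ?_⟩
  · intro heq
    apply huv
    rw [cint u hu v hv]
    have hu' : u ∈ D ⊔ Submodule.span R {u} :=
      Submodule.mem_sup_right (Submodule.mem_span_singleton_self u)
    have hv' : v ∈ D ⊔ Submodule.span R {u} := by
      rw [heq]
      exact Submodule.mem_sup_right (Submodule.mem_span_singleton_self v)
    rw [← h1.2.1] at hu'
    exact hu' v hv'
  · intro L
    constructor
    · rintro ⟨-, hLd, hDL, hLM⟩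
      have hor : ∀ x ∈ L, x ∈ D ⊔ Submodule.span R {u} ∨ x ∈ D ⊔ Submodule.span R {v} := by
        intro x hx
        have hxx : c x x = 0 := by
          rw [cint x (hLM hx) x (hLM hx)]
          have := hx
          rw [← hLd] at this
          exact this x hx
        obtain ⟨d, hd, s, t, rfl⟩ := hgen x (hLM hx)
        have hm : ∀ z ∈ M, c (d + s • u + t • v) z = res s * c u z + res t * c v z := by
          intro z hz
          rw [cadd _ (M.add_mem (hDM hd) (M.smul_mem _ hu)) _ (M.smul_mem _ hv) _ hz,
            cadd _ (hDM hd) _ (M.smul_mem _ hu) _ hz, cD d hd z hz, csmul _ _ hu _ hz,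
            csmul _ _ hv _ hz, zero_add]
        have hxM := hLM hx
        rw [hm _ hxM, csymm _ hu _ hxM, csymm _ hv _ hxM, hm _ hu, hm _ hv, huu, hvv,
          csymm _ hv _ hu] at hxx
        have h3 : 2 * c u v * (res s * res t) = 0 := by linear_combination hxx
        have h4 := (mul_eq_zero.1 h3).resolve_left (mul_ne_zero h2 huv)
        rcases mul_eq_zero.1 h4 with hs0 | ht0
        · right
          exact Submodule.add_mem _ (Submodule.mem_sup_left (D.add_mem hd (hker s u hu hs0)))
            (Submodule.mem_sup_right (Submodule.smul_mem _ _ (Submodule.mem_span_singleton_self v)))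
        · left
          rw [add_right_comm]
          exact Submodule.add_mem _ (Submodule.mem_sup_left (D.add_mem hd (hker t v hv ht0)))
            (Submodule.mem_sup_right (Submodule.smul_mem _ _ (Submodule.mem_span_singleton_self u)))
      have hfin : ∀ A : Submodule R V, B.dualSubmodule A = A → L ≤ A → L = A := by
        intro A hA hLA
        apply le_antisymm hLA
        rw [← hA, ← hLd]
        exact hmono _ _ hLA
      by_cases hL1 : L ≤ D ⊔ Submodule.span R {u}
      · exact Or.inl (hfin _ h1.2.1 hL1)
      · right
        apply hfin _ h2'.2.1
        obtain ⟨x, hxL, hx1⟩ := SetLike.not_le_iff_exists.1 hL1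
        have hx2 := (hor x hxL).resolve_left hx1
        intro y hy
        by_contra hy2
        have hy1 := (hor y hy).resolve_right hy2
        rcases hor _ (L.add_mem hxL hy) with h | h
        · exact hx1 ((Submodule.add_mem_iff_left _ hy1).1 h)
        · exact hy2 ((Submodule.add_mem_iff_right _ hx2).1 h)
    · rintro (rfl | rfl)
      · exact h1
      · exact h2'

theorem aux_witt (p : ℕ) [Fact p.Prime] (k : Type*) [Field k] [CharP k p] [PerfectRing k p]
    (r : WittVector p k) :
    (WittVector.constantCoeff : WittVector p k →+* k) r = 0 ↔ (p : WittVector p k) ∣ r := by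
  constructor
  · intro h
    by_cases hr : r = 0
    · simp [hr]
    obtain ⟨m, b, hb, rfl⟩ := WittVector.exists_eq_pow_p_mul r hr
    rcases m with _ | m
    · simp only [pow_zero, one_mul] at h
      exact absurd h hb
    · rw [pow_succ', mul_assoc]
      exact dvd_mul_right _ _
  · rintro ⟨b, rfl⟩
    rw [map_mul, map_natCast, CharP.cast_eq_zero, zero_mul]

variable (p : ℕ) [Fact p.Prime] (𝔽 : Type*) [Field 𝔽] [CharP 𝔽 p] [IsAlgClosed 𝔽]
variable {V : Type*} [AddCommGroup V]
  [Module (FractionRing (WittVector p 𝔽)) V]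
  [Module (WittVector p 𝔽) V]
  [IsScalarTower (WittVector p 𝔽) (FractionRing (WittVector p 𝔽)) V]

/-- `L` is a `W₀`-lattice in the `K₀`-vector space `V`:
a finitely generated `W₀`-submodule spanning `V` over `K₀`. -/
def IsLattice (L : Submodule (WittVector p 𝔽) V) : Prop :=
  L.FG ∧ Submodule.span (FractionRing (WittVector p 𝔽)) (L : Set V) = ⊤

/-- The dual lattice `L^∨ = {x ∈ V : [x, y] ∈ W₀ for all y ∈ L}` with respect to the bilinear
form `[x, y] = Q (x + y) - Q x - Q y` associated to `Q`. -/
noncomputable def dualLattice (Q : QuadraticForm (FractionRing (WittVector p 𝔽)) V)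
    (L : Submodule (WittVector p 𝔽) V) : Submodule (WittVector p 𝔽) V :=
  LinearMap.BilinForm.dualSubmodule (QuadraticMap.polarBilin Q) L

/-- There is a saturated chain (each step a covering in the lattice of `W₀`-submodules) of
length `k` from `A` to `B`.  For `A ≤ B` this says exactly that the `W₀`-module `B/A` has
length `k`. -/
def chainLength (A B : Submodule (WittVector p 𝔽) V) (k : ℕ) : Prop :=
  ∃ f : Fin (k + 1) → Submodule (WittVector p 𝔽) V,
    f 0 = A ∧ f (Fin.last k) = B ∧ ∀ i : Fin k, f i.castSucc ⋖ f i.succ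

theorem statement_8 (hp : p ≠ 2) [FiniteDimensional (FractionRing (WittVector p 𝔽)) V]
    (Q : QuadraticForm (FractionRing (WittVector p 𝔽)) V)
    (hQ : LinearMap.BilinForm.Nondegenerate (QuadraticMap.polarBilin Q))
    (M : Submodule (WittVector p 𝔽) V) (hM : IsLattice p 𝔽 M)
    (hMp : ∀ x ∈ M, (p : WittVector p 𝔽) • x ∈ dualLattice p 𝔽 Q M)
    (hMdual : dualLattice p 𝔽 Q M ≤ M)
    (hlen : chainLength p 𝔽 (dualLattice p 𝔽 Q M) M 2) :
    ∃ L₁ L₂ : Submodule (WittVector p 𝔽) V, L₁ ≠ L₂ ∧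
      ∀ L : Submodule (WittVector p 𝔽) V,
        (IsLattice p 𝔽 L ∧ dualLattice p 𝔽 Q L = L ∧ dualLattice p 𝔽 Q M ≤ L ∧ L ≤ M) ↔
          (L = L₁ ∨ L = L₂) := by
  have hpp : (p : WittVector p 𝔽) ≠ 0 := (WittVector.irreducible p).ne_zero
  have h2 : (2 : 𝔽) ≠ 0 := by
    intro h
    have h' : ((2 : ℕ) : 𝔽) = 0 := by exact_mod_cast h
    rw [CharP.cast_eq_zero_iff 𝔽 p] at h'
    exact hp ((Nat.prime_dvd_prime_iff_eq (Fact.out : p.Prime) Nat.prime_two).1 h')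
  have hsurj : Function.Surjective (WittVector.constantCoeff : WittVector p 𝔽 →+* 𝔽) :=
    fun x => ⟨WittVector.teichmuller p x, WittVector.teichmuller_coeff_zero p x⟩
  obtain ⟨f, hf0, hf2, hf⟩ := hlen
  have hc0 := hf 0
  have hc1 := hf 1
  have e0 : (Fin.castSucc (0 : Fin 2)) = 0 := rfl
  have e1 : (Fin.succ (1 : Fin 2)) = Fin.last 2 := rfl
  have e2 : (Fin.succ (0 : Fin 2)) = 1 := rfl
  have e3 : (Fin.castSucc (1 : Fin 2)) = 1 := rfl
  rw [e0, hf0, e2] at hc0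
  rw [e1, hf2, e3] at hc1
  exact aux_main h2 WittVector.constantCoeff hsurj (p : WittVector p 𝔽) hpp (aux_witt p 𝔽)
    (QuadraticMap.polarBilin Q) hQ ⟨fun x y => QuadraticMap.polar_comm Q x y⟩ M (f 1)
    hM.1 hM.2 hMp hc0 hc1
end

section
/- In the semilinear setting below, let M be a W₀-lattice in V with pM ⊆ M^∨ ⊆ M, with M/M^∨ of length 2 as a W₀-module, and with Φ_*(M) = M. Let L be a self-dual W₀-lattice with M^∨ ⊆ L ⊆ M and Φ_*(L) ≠ L. Then Φ_*(L) is again a self-dual W₀-lattice with M^∨ ⊆ Φ_*(L) ⊆ M, and Φ_*(Φ_*(L)) = L. -/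
/-!
Statement 9: In the semilinear setting (`W₀ = W(𝔽)`, `K₀ = Frac W₀`, `σ` the automorphism of
`K₀` induced by the Witt vector Frobenius, `Φ : V → V` a `σ`-semilinear bijection with
`Q (Φ v) = σ (Q v)`), let `M` be a `W₀`-lattice with `pM ⊆ M^∨ ⊆ M`, with `M/M^∨` of length 2,
and with `Φ_* M = M`.  Let `L` be a self-dual lattice with `M^∨ ⊆ L ⊆ M` and `Φ_* L ≠ L`.
Then `Φ_* L` is again self-dual with `M^∨ ⊆ Φ_* L ⊆ M`, and `Φ_* (Φ_* L) = L`.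
-/

open QuadraticMap

variable (p : ℕ) [Fact p.Prime] (𝔽 : Type*) [Field 𝔽] [CharP 𝔽 p] [IsAlgClosed 𝔽]
variable {V : Type*} [AddCommGroup V]
  [Module (FractionRing (WittVector p 𝔽)) V]
  [Module (WittVector p 𝔽) V]
  [IsScalarTower (WittVector p 𝔽) (FractionRing (WittVector p 𝔽)) V]

/-- `Φ_* L`: the `W₀`-span of the image of `L` under `Φ`. -/
noncomputable def phiStar (Φ : V ≃+ V) (L : Submodule (WittVector p 𝔽) V) :
    Submodule (WittVector p 𝔽) V :=
  Submodule.span (WittVector p 𝔽) (⇑Φ '' (L : Set V))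

theorem aux_mem_dual (Q : QuadraticForm (FractionRing (WittVector p 𝔽)) V)
    (L : Submodule (WittVector p 𝔽) V) (x : V) :
    x ∈ dualLattice p 𝔽 Q L ↔ ∀ y ∈ L, ∃ w : WittVector p 𝔽,
      algebraMap (WittVector p 𝔽) (FractionRing (WittVector p 𝔽)) w = polar Q x y := by
  unfold dualLattice
  simp only [LinearMap.BilinForm.mem_dualSubmodule, Submodule.mem_one, polarBilin_apply_apply]

theorem aux_frob (w : WittVector p 𝔽) :
    WittVector.FractionRing.frobenius p 𝔽
      (algebraMap (WittVector p 𝔽) (FractionRing (WittVector p 𝔽)) w) =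
    algebraMap (WittVector p 𝔽) (FractionRing (WittVector p 𝔽))
      (WittVector.frobeniusEquiv p 𝔽 w) := by
  unfold WittVector.FractionRing.frobenius
  exact IsFractionRing.ringEquivOfRingEquiv_algebraMap _ _

theorem aux_two (hp : p ≠ 2) : ∃ u : WittVector p 𝔽, u * 2 = 1 := by
  have h2 : (2 : 𝔽) ≠ 0 := by
    intro h
    have h' : ((2 : ℕ) : 𝔽) = 0 := by exact_mod_cast h
    rw [CharP.cast_eq_zero_iff 𝔽 p] at h'
    exact hp ((Nat.prime_dvd_prime_iff_eq (Fact.out) Nat.prime_two).1 h')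
  have : IsUnit (2 : WittVector p 𝔽) := by
    apply WittVector.isUnit_of_coeff_zero_ne_zero
    have := map_ofNat (WittVector.constantCoeff (p := p) (R := 𝔽)) 2
    rw [WittVector.constantCoeff_apply] at this
    rw [this]
    exact h2
  obtain ⟨u, hu⟩ := this.exists_left_inv
  exact ⟨u, hu⟩

theorem aux_mem_phi (Φ : V ≃+ V)
    (hΦsemi : ∀ (a : FractionRing (WittVector p 𝔽)) (v : V),
      Φ (a • v) = WittVector.FractionRing.frobenius p 𝔽 a • Φ v)
    (L : Submodule (WittVector p 𝔽) V) (x : V) :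
    x ∈ phiStar p 𝔽 Φ L ↔ ∃ y ∈ L, Φ y = x := by
  constructor
  · intro h
    unfold phiStar at h
    induction h using Submodule.span_induction with
    | mem x h => exact h
    | zero => exact ⟨0, L.zero_mem, map_zero _⟩
    | add x y _ _ hx hy =>
      obtain ⟨a, ha, rfl⟩ := hx
      obtain ⟨b, hb, rfl⟩ := hy
      exact ⟨a + b, L.add_mem ha hb, map_add _ _ _⟩
    | smul w x _ hx =>
      obtain ⟨a, ha, rfl⟩ := hx
      refine ⟨(WittVector.frobeniusEquiv p 𝔽).symm w • a, L.smul_mem _ ha, ?_⟩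
      rw [← algebraMap_smul (FractionRing (WittVector p 𝔽)), hΦsemi, aux_frob,
        RingEquiv.apply_symm_apply, algebraMap_smul]
  · rintro ⟨y, hy, rfl⟩
    exact Submodule.subset_span ⟨y, hy, rfl⟩

theorem aux_phi_dual (Q : QuadraticForm (FractionRing (WittVector p 𝔽)) V) (Φ : V ≃+ V)
    (hΦsemi : ∀ (a : FractionRing (WittVector p 𝔽)) (v : V),
      Φ (a • v) = WittVector.FractionRing.frobenius p 𝔽 a • Φ v)
    (hΦQ : ∀ v : V, Q (Φ v) = WittVector.FractionRing.frobenius p 𝔽 (Q v))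
    (L : Submodule (WittVector p 𝔽) V) :
    dualLattice p 𝔽 Q (phiStar p 𝔽 Φ L) = phiStar p 𝔽 Φ (dualLattice p 𝔽 Q L) := by
  have hpol : ∀ x y, polar Q (Φ x) (Φ y) =
      WittVector.FractionRing.frobenius p 𝔽 (polar Q x y) := by
    intro x y
    simp only [polar, ← map_add Φ, hΦQ, map_sub]
  ext x
  obtain ⟨z, rfl⟩ := Φ.surjective x
  rw [aux_mem_phi p 𝔽 Φ hΦsemi]
  simp only [EmbeddingLike.apply_eq_iff_eq, exists_eq_right, aux_mem_dual,
    aux_mem_phi p 𝔽 Φ hΦsemi]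
  constructor
  · intro h y hy
    obtain ⟨w, hw⟩ := h (Φ y) ⟨y, hy, rfl⟩
    refine ⟨(WittVector.frobeniusEquiv p 𝔽).symm w, ?_⟩
    apply (WittVector.FractionRing.frobenius p 𝔽).injective
    rw [aux_frob, RingEquiv.apply_symm_apply, hw, hpol]
  · rintro h _ ⟨y, hy, rfl⟩
    obtain ⟨w, hw⟩ := h y hy
    exact ⟨WittVector.frobeniusEquiv p 𝔽 w, by rw [hpol, ← hw, aux_frob]⟩

theorem aux_phi_mono (Φ : V ≃+ V) {A B : Submodule (WittVector p 𝔽) V} (h : A ≤ B) :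
    phiStar p 𝔽 Φ A ≤ phiStar p 𝔽 Φ B :=
  Submodule.span_mono (Set.image_mono h)

theorem aux_phi_inj (Φ : V ≃+ V)
    (hΦsemi : ∀ (a : FractionRing (WittVector p 𝔽)) (v : V),
      Φ (a • v) = WittVector.FractionRing.frobenius p 𝔽 a • Φ v)
    {A B : Submodule (WittVector p 𝔽) V} (h : phiStar p 𝔽 Φ A = phiStar p 𝔽 Φ B) : A = B := by
  ext x
  have := SetLike.ext_iff.1 h (Φ x)
  simpa [aux_mem_phi p 𝔽 Φ hΦsemi] using this

theorem aux_order {α : Type*} [Lattice α] [IsModularLattice α] {D N M A : α}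
    (h1 : D ⋖ N) (h2 : N ⋖ M) (hA1 : D < A) (hA2 : A < M) : D ⋖ A ∧ A ⋖ M := by
  by_cases hAN : A ≤ N
  · have : A = N := (h1.eq_or_eq hA1.le hAN).resolve_left hA1.ne'
    subst this
    exact ⟨h1, h2⟩
  · have hs : N ⊔ A = M := by
      rcases h2.eq_or_eq le_sup_left (sup_le h2.le hA2.le) with h | h
      · exact absurd (h ▸ le_sup_right) hAN
      · exact h
    have hi : N ⊓ A = D := by
      rcases h1.eq_or_eq (le_inf h1.le hA1.le) inf_le_left with h | h
      · exact h
      · have hNA : N ≤ A := inf_eq_left.1 h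
        rw [sup_eq_right.2 hNA] at hs
        exact absurd hs hA2.ne
    constructor
    · rw [← hi]
      exact inf_covBy_of_covBy_sup_left (hs.symm ▸ h2)
    · rw [← hs]
      exact covBy_sup_of_inf_covBy_left (hi.symm ▸ h1)

theorem aux_dual_anti (Q : QuadraticForm (FractionRing (WittVector p 𝔽)) V)
    {A B : Submodule (WittVector p 𝔽) V} (h : A ≤ B) :
    dualLattice p 𝔽 Q B ≤ dualLattice p 𝔽 Q A := by
  intro x hx
  rw [aux_mem_dual] at hx ⊢
  exact fun y hy => hx y (h hy)

/-- if `a ∈ A` lies outside `D ⋖ A` and likewise `b ∈ B`, and `[a,b]` is integral, `A ≤ B^∨`. -/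
theorem aux_cross (Q : QuadraticForm (FractionRing (WittVector p 𝔽)) V)
    (M A B : Submodule (WittVector p 𝔽) V)
    (hA : dualLattice p 𝔽 Q M ⋖ A) (hB : dualLattice p 𝔽 Q M ⋖ B) (hAM : A ≤ M) (hBM : B ≤ M)
    (a b : V) (ha : a ∈ A) (hb : b ∈ B) (ha' : a ∉ dualLattice p 𝔽 Q M)
    (hb' : b ∉ dualLattice p 𝔽 Q M)
    (hab : ∃ w : WittVector p 𝔽,
      algebraMap (WittVector p 𝔽) (FractionRing (WittVector p 𝔽)) w = polar Q a b) :
    A ≤ dualLattice p 𝔽 Q B := by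
  have gen : ∀ (A : Submodule (WittVector p 𝔽) V) (a : V), dualLattice p 𝔽 Q M ⋖ A → a ∈ A →
      a ∉ dualLattice p 𝔽 Q M → dualLattice p 𝔽 Q M ⊔ Submodule.span _ {a} = A := by
    intro A a hA ha ha'
    refine (hA.eq_or_eq le_sup_left (sup_le hA.le ?_)).resolve_left ?_
    · rwa [Submodule.span_singleton_le_iff_mem]
    · intro h
      exact ha' (h ▸ Submodule.mem_sup_right (Submodule.mem_span_singleton_self a))
  have hD : ∀ d ∈ dualLattice p 𝔽 Q M, ∀ y ∈ M, ∃ w : WittVector p 𝔽,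
      algebraMap (WittVector p 𝔽) (FractionRing (WittVector p 𝔽)) w = polar Q d y :=
    fun d hd => (aux_mem_dual p 𝔽 Q M d).1 hd
  rw [← gen A a hA ha ha']
  refine sup_le (aux_dual_anti p 𝔽 Q hBM) ?_
  rw [Submodule.span_singleton_le_iff_mem, aux_mem_dual]
  intro y hy
  rw [← gen B b hB hb hb', Submodule.mem_sup] at hy
  obtain ⟨d, hd, e, he, rfl⟩ := hy
  obtain ⟨r, rfl⟩ := Submodule.mem_span_singleton.1 he
  obtain ⟨w, hw⟩ := hab
  obtain ⟨v, hv⟩ := hD d hd a (hAM ha)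
  refine ⟨v + r * w, ?_⟩
  rw [polar_add_right, polar_comm Q a d, ← hv, ← algebraMap_smul (FractionRing (WittVector p 𝔽)) r,
    polar_smul_right, ← hw, map_add, map_mul, smul_eq_mul]

theorem aux_key (hp : p ≠ 2) (Q : QuadraticForm (FractionRing (WittVector p 𝔽)) V)
    (M A B C : Submodule (WittVector p 𝔽) V)
    (hlen : chainLength p 𝔽 (dualLattice p 𝔽 Q M) M 2)
    (hA : dualLattice p 𝔽 Q A = A) (hAM : A ≤ M)
    (hB : dualLattice p 𝔽 Q B = B) (hBM : B ≤ M)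
    (hC : dualLattice p 𝔽 Q C = C) (hCM : C ≤ M) (hAB : B ≠ A) :
    C = A ∨ C = B := by
  obtain ⟨f, h0, h2, hf⟩ := hlen
  have c1 : dualLattice p 𝔽 Q M ⋖ f 1 := by
    have := hf 0
    rw [← h0]; exact this
  have c2 : f 1 ⋖ M := by
    have := hf 1
    rw [← h2]; exact this
  have hlt : dualLattice p 𝔽 Q M < M := c1.lt.trans c2.lt
  have cov : ∀ A : Submodule (WittVector p 𝔽) V, dualLattice p 𝔽 Q A = A → A ≤ M →
      dualLattice p 𝔽 Q M ⋖ A ∧ A ⋖ M := by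
    intro A hA hAM
    have hDA : dualLattice p 𝔽 Q M ≤ A := hA ▸ aux_dual_anti p 𝔽 Q hAM
    have hne : A ≠ M := by
      rintro rfl
      exact hlt.ne hA
    refine aux_order c1 c2 (lt_of_le_of_ne hDA ?_) (lt_of_le_of_ne hAM hne)
    intro h
    apply hne
    apply le_antisymm hAM
    rw [← hA, ← h]
    intro x hx
    rw [aux_mem_dual]
    intro y hy
    rw [polar_comm]
    exact (aux_mem_dual p 𝔽 Q M y).1 hy x hx
  obtain ⟨A1, A2⟩ := cov A hA hAM
  obtain ⟨B1, B2⟩ := cov B hB hBM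
  obtain ⟨C1, C2⟩ := cov C hC hCM
  -- two such lattices sharing an element outside the dual agree
  have share : ∀ X Y : Submodule (WittVector p 𝔽) V, dualLattice p 𝔽 Q M ⋖ X →
      dualLattice p 𝔽 Q M ⋖ Y → ∀ x ∈ X, x ∈ Y → x ∉ dualLattice p 𝔽 Q M → X = Y := by
    intro X Y hX hY x hxX hxY hx
    have e1 := (hX.eq_or_eq (le_inf hX.le hY.le) inf_le_left).resolve_left
      (fun h => hx (h ▸ (⟨hxX, hxY⟩ : x ∈ X ⊓ Y)))
    have e2 := (hY.eq_or_eq (le_inf hX.le hY.le) inf_le_right).resolve_left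
      (fun h => hx (h ▸ (⟨hxX, hxY⟩ : x ∈ X ⊓ Y)))
    exact e1.symm.trans e2
  have hsup : A ⊔ B = M := by
    refine (A2.eq_or_eq le_sup_left (sup_le hAM hBM)).resolve_left ?_
    intro h
    have hBA : B ≤ A := sup_eq_left.1 h
    exact hAB ((A1.eq_or_eq B1.le hBA).resolve_left B1.lt.ne')
  obtain ⟨c, hcC, hcD⟩ := SetLike.exists_of_lt C1.lt
  have hcM := hCM hcC
  rw [← hsup, Submodule.mem_sup] at hcM
  obtain ⟨a, ha, b, hb, rfl⟩ := hcM
  by_cases haD : a ∈ dualLattice p 𝔽 Q M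
  · right
    exact share C B C1 B1 _ hcC (B.add_mem (B1.le haD) hb) hcD
  by_cases hbD : b ∈ dualLattice p 𝔽 Q M
  · left
    exact share C A C1 A1 _ hcC (A.add_mem ha (A1.le hbD)) hcD
  exfalso
  have self : ∀ X : Submodule (WittVector p 𝔽) V, dualLattice p 𝔽 Q X = X → ∀ x ∈ X,
      ∃ w : WittVector p 𝔽,
      algebraMap (WittVector p 𝔽) (FractionRing (WittVector p 𝔽)) w = polar Q x x :=
    fun X hX x hx => (aux_mem_dual p 𝔽 Q X x).1 (hX.symm ▸ hx) x hx
  obtain ⟨u, hu⟩ := self A hA a ha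
  obtain ⟨v, hv⟩ := self B hB b hb
  obtain ⟨w, hw⟩ := self C hC _ hcC
  obtain ⟨t, ht⟩ := aux_two p 𝔽 hp
  have hab : ∃ w : WittVector p 𝔽,
      algebraMap (WittVector p 𝔽) (FractionRing (WittVector p 𝔽)) w = polar Q a b := by
    refine ⟨t * (w - u - v), ?_⟩
    have ht' := congrArg (algebraMap (WittVector p 𝔽) (FractionRing (WittVector p 𝔽))) ht
    rw [map_mul, map_one, map_ofNat] at ht'
    rw [map_mul, map_sub, map_sub, hu, hv, hw, polar_add_left, polar_add_right, polar_add_right,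
      polar_comm Q b a]
    linear_combination (polar Q a b) * ht'
  have hle := aux_cross p 𝔽 Q M A B A1 B1 hAM hBM a b ha hb haD hbD hab
  rw [hB] at hle
  exact hAB ((B1.eq_or_eq A1.le hle).resolve_left A1.lt.ne').symm

theorem statement_9 (hp : p ≠ 2) [FiniteDimensional (FractionRing (WittVector p 𝔽)) V]
    (Q : QuadraticForm (FractionRing (WittVector p 𝔽)) V)
    (hQ : LinearMap.SeparatingLeft (QuadraticMap.polarBilin Q))
    (Φ : V ≃+ V)
    (hΦsemi : ∀ (a : FractionRing (WittVector p 𝔽)) (v : V),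
      Φ (a • v) = WittVector.FractionRing.frobenius p 𝔽 a • Φ v)
    (hΦQ : ∀ v : V, Q (Φ v) = WittVector.FractionRing.frobenius p 𝔽 (Q v))
    (M : Submodule (WittVector p 𝔽) V) (hM : IsLattice p 𝔽 M)
    (hMp : ∀ x ∈ M, (p : WittVector p 𝔽) • x ∈ dualLattice p 𝔽 Q M)
    (hMdual : dualLattice p 𝔽 Q M ≤ M)
    (hlen : chainLength p 𝔽 (dualLattice p 𝔽 Q M) M 2)
    (hMΦ : phiStar p 𝔽 Φ M = M)
    (L : Submodule (WittVector p 𝔽) V)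
    (hLsd : dualLattice p 𝔽 Q L = L)
    (hL₁ : dualLattice p 𝔽 Q M ≤ L) (hL₂ : L ≤ M)
    (hLΦ : phiStar p 𝔽 Φ L ≠ L) :
    dualLattice p 𝔽 Q (phiStar p 𝔽 Φ L) = phiStar p 𝔽 Φ L ∧
    dualLattice p 𝔽 Q M ≤ phiStar p 𝔽 Φ L ∧ phiStar p 𝔽 Φ L ≤ M ∧
    phiStar p 𝔽 Φ (phiStar p 𝔽 Φ L) = L := by
  have hsd : dualLattice p 𝔽 Q (phiStar p 𝔽 Φ L) = phiStar p 𝔽 Φ L := by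
    rw [aux_phi_dual p 𝔽 Q Φ hΦsemi hΦQ, hLsd]
  have hsd2 : dualLattice p 𝔽 Q (phiStar p 𝔽 Φ (phiStar p 𝔽 Φ L)) =
      phiStar p 𝔽 Φ (phiStar p 𝔽 Φ L) := by
    rw [aux_phi_dual p 𝔽 Q Φ hΦsemi hΦQ, hsd]
  have hle : phiStar p 𝔽 Φ L ≤ M := (aux_phi_mono p 𝔽 Φ hL₂).trans hMΦ.le
  have hle2 : phiStar p 𝔽 Φ (phiStar p 𝔽 Φ L) ≤ M := (aux_phi_mono p 𝔽 Φ hle).trans hMΦ.le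
  refine ⟨hsd, ?_, hle, ?_⟩
  · rw [← hsd]
    exact aux_dual_anti p 𝔽 Q hle
  · rcases aux_key p 𝔽 hp Q M L _ _ hlen hLsd hL₂ hsd hle hsd2 hle2 hLΦ with h | h
    · exact h
    · exact absurd (aux_phi_inj p 𝔽 Φ hΦsemi h) hLΦ
end

section
/- Let p be an odd prime and (V, Q) a nondegenerate quadratic space over ℚ_p of dimension n ≥ 3 containing no self-dual lattice. Let 𝔽 be an algebraically closed field of characteristic p, W₀ = W(𝔽), K₀ = Frac(W₀), and extend Q to the base change V ⊗_{ℚ_p} K₀. Consider pairs (Λ, L) where Λ ⊆ V is a vertex lattice of type 2 (pΛ ⊆ Λ^∨ ⊆ Λ, dim_{𝔽_p}(Λ/Λ^∨) = 2) and L is a self-dual W₀-lattice in V ⊗_{ℚ_p} K₀ with Λ^∨ ⊗_{ℤ_p} W₀ ⊆ L ⊆ Λ ⊗_{ℤ_p} W₀. Then for any two such pairs (Λ₁, L₁) and (Λ₂, L₂) there exists a ℚ_p-linear isometry g of (V, Q) with det(g) = 1 such that g(Λ₁) = Λ₂ and (g ⊗ 1)(L₁) = L₂; that is, SO(V)(ℚ_p)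 acts transitively on the set of such pairs. -/
/-!
Statement 10: Let `p` be an odd prime and `(V, Q)` a nondegenerate quadratic space over `ℚ_p`
of dimension `n ≥ 3` containing no self-dual lattice.  Let `𝔽` be an algebraically closed
field of characteristic `p`, `W₀ = W(𝔽)`, `K₀ = Frac W₀`, and extend `Q` to `V ⊗_{ℚ_p} K₀`.
Consider pairs `(Λ, L)` where `Λ ⊆ V` is a vertex lattice of type 2 and `L` is a self-dual
`W₀`-lattice in `V ⊗_{ℚ_p} K₀` with `Λ^∨ ⊗ W₀ ⊆ L ⊆ Λ ⊗ W₀`.  Then `SO(V)(ℚ_p)` acts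
transitively on the set of such pairs.
-/

open QuadraticMap

variable (p : ℕ) [Fact p.Prime]
variable {V : Type*} [AddCommGroup V] [Module ℚ_[p] V] [Module ℤ_[p] V]
  [IsScalarTower ℤ_[p] ℚ_[p] V]

/-- `L` is a `ℤ_p`-lattice in the `ℚ_p`-vector space `V`. -/
def IsZpLattice (L : Submodule ℤ_[p] V) : Prop :=
  L.FG ∧ Submodule.span ℚ_[p] (L : Set V) = ⊤

/-- The dual lattice `L^∨` with respect to the bilinear form associated to `Q`. -/
noncomputable def zpDual (Q : QuadraticForm ℚ_[p] V) (L : Submodule ℤ_[p] V) :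
    Submodule ℤ_[p] V :=
  LinearMap.BilinForm.dualSubmodule (QuadraticMap.polarBilin Q) L

/-- A saturated chain of `ℤ_p`-submodules of length `k` from `A` to `B`; for `A ≤ B` killed by
`p` this says `dim_{𝔽_p} (B/A) = k`. -/
def zpChainLength (A B : Submodule ℤ_[p] V) (k : ℕ) : Prop :=
  ∃ f : Fin (k + 1) → Submodule ℤ_[p] V,
    f 0 = A ∧ f (Fin.last k) = B ∧ ∀ i : Fin k, f i.castSucc ⋖ f i.succ

/-- `Λ` is a vertex lattice of type 2. -/
noncomputable def IsTypeTwoVertexLattice (Q : QuadraticForm ℚ_[p] V)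
    (Λ : Submodule ℤ_[p] V) : Prop :=
  IsZpLattice p Λ ∧ (∀ x ∈ Λ, (p : ℤ_[p]) • x ∈ zpDual p Q Λ) ∧
    zpDual p Q Λ ≤ Λ ∧ zpChainLength p (zpDual p Q Λ) Λ 2

section BaseChange

variable (𝔽 : Type*) [Field 𝔽] [CharP 𝔽 p] [IsAlgClosed 𝔽]
variable [Algebra ℚ_[p] (FractionRing (WittVector p 𝔽))]
variable [SMulCommClass ℚ_[p] (WittVector p 𝔽) (FractionRing (WittVector p 𝔽))]

/-- `L` is a `W₀`-lattice in `K₀ ⊗_{ℚ_p} V`. -/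
def IsWLattice
    (L : Submodule (WittVector p 𝔽) (TensorProduct ℚ_[p] (FractionRing (WittVector p 𝔽)) V)) :
    Prop :=
  L.FG ∧ Submodule.span (FractionRing (WittVector p 𝔽))
    (L : Set (TensorProduct ℚ_[p] (FractionRing (WittVector p 𝔽)) V)) = ⊤

/-- The dual lattice in `K₀ ⊗_{ℚ_p} V` with respect to the base-changed form. -/
noncomputable def wDual
    (QK : QuadraticForm (FractionRing (WittVector p 𝔽))
      (TensorProduct ℚ_[p] (FractionRing (WittVector p 𝔽)) V))
    (L : Submodule (WittVector p 𝔽) (TensorProduct ℚ_[p] (FractionRing (WittVector p 𝔽)) V)) :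
    Submodule (WittVector p 𝔽) (TensorProduct ℚ_[p] (FractionRing (WittVector p 𝔽)) V) :=
  LinearMap.BilinForm.dualSubmodule (QuadraticMap.polarBilin QK) L

/-- `Λ ⊗_{ℤ_p} W₀`, viewed inside `K₀ ⊗_{ℚ_p} V`: the `W₀`-span of the image of `Λ`. -/
noncomputable def baseChangeLattice (Λ : Submodule ℤ_[p] V) :
    Submodule (WittVector p 𝔽) (TensorProduct ℚ_[p] (FractionRing (WittVector p 𝔽)) V) :=
  Submodule.span (WittVector p 𝔽)
    ((fun v => (1 : FractionRing (WittVector p 𝔽)) ⊗ₜ[ℚ_[p]] v) '' (Λ : Set V))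

section Arith

theorem zp_sq_of_mod (hp : p ≠ 2) (v : ℤ_[p]) (hv : IsUnit v)
    (h : IsSquare (PadicInt.toZMod v)) : ∃ s : ℤ_[p], IsUnit s ∧ v = s ^ 2 := by
  obtain ⟨r, hr⟩ := h
  obtain ⟨a, ha⟩ := ZMod.ringHom_surjective (PadicInt.toZMod (p := p)) r
  have hker : ∀ x : ℤ_[p], PadicInt.toZMod x = 0 ↔ x ∈ IsLocalRing.maximalIdeal ℤ_[p] := by
    intro x; rw [← PadicInt.ker_toZMod, RingHom.mem_ker]
  have hunit : ∀ x : ℤ_[p], PadicInt.toZMod x ≠ 0 ↔ IsUnit x := by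
    intro x; rw [Ne, hker, IsLocalRing.mem_maximalIdeal, mem_nonunits_iff, not_not]
  have hau : IsUnit a := by
    rw [← hunit, ha]
    rintro rfl
    exact ((hunit v).2 hv) (by simpa using hr)
  have h2 : IsUnit (2 : ℤ_[p]) := by
    rw [← hunit, map_ofNat]
    have : Fact (2 < p) := ⟨lt_of_le_of_ne (Fact.out : p.Prime).two_le (Ne.symm hp)⟩
    exact Ring.two_ne_zero (by rw [ZMod.ringChar_zmod_n]; exact hp)
  obtain ⟨s, hs, hs2⟩ := HenselianRing.is_henselian (R := ℤ_[p])
    (I := IsLocalRing.maximalIdeal ℤ_[p]) (Polynomial.X ^ 2 - Polynomial.C v)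
    (Polynomial.monic_X_pow_sub_C v two_ne_zero) a
    (by rw [← hker]; simp [ha, hr, pow_two])
    (by
      apply IsUnit.map
      have : IsUnit (2 * a) := h2.mul hau
      simpa [one_add_one_eq_two] using this)
  have hsv : v = s ^ 2 := by
    have : s ^ 2 - v = 0 := by simpa using hs
    exact (sub_eq_zero.1 this).symm
  refine ⟨s, ?_, hsv⟩
  rw [hsv] at hv
  exact (isUnit_pow_iff two_ne_zero).1 hv

theorem zp_two_unit (hp : p ≠ 2) : IsUnit (2 : ℤ_[p]) := by
  have : ((2 : ℕ) : ℤ_[p]) = 2 := by norm_num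
  rw [← this, PadicInt.isUnit_iff, PadicInt.norm_natCast_eq_one_iff]
  exact (Nat.coprime_primes (Fact.out) Nat.prime_two).2 hp

theorem zp_unit_iff (x : ℤ_[p]) : IsUnit x ↔ PadicInt.toZMod x ≠ 0 := by
  rw [Ne, ← RingHom.mem_ker, PadicInt.ker_toZMod, IsLocalRing.mem_maximalIdeal,
    mem_nonunits_iff, not_not]

/-- a non-square unit `u`, representing all nonsquare unit classes. -/
theorem zp_nonsq (hp : p ≠ 2) : ∃ u : ℤ_[p], IsUnit u ∧ ∀ v : ℤ_[p], IsUnit v →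
    (∃ s : ℤ_[p], IsUnit s ∧ v = s ^ 2) ∨ (∃ s : ℤ_[p], IsUnit s ∧ v * s ^ 2 = u) := by
  obtain ⟨r, hr⟩ := FiniteField.exists_nonsquare (F := ZMod p)
    (by rw [ZMod.ringChar_zmod_n]; exact hp)
  obtain ⟨u, hu⟩ := ZMod.ringHom_surjective (PadicInt.toZMod (p := p)) r
  have huu : IsUnit u := by
    rw [zp_unit_iff, hu]; rintro rfl; exact hr (IsSquare.zero)
  refine ⟨u, huu, fun v hv => ?_⟩
  by_cases h : IsSquare (PadicInt.toZMod v)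
  · exact Or.inl (zp_sq_of_mod p hp v hv h)
  · right
    have : IsSquare (PadicInt.toZMod (u * v)) := by
      rw [map_mul, hu]
      have h0 : PadicInt.toZMod v ≠ 0 := (zp_unit_iff p v).1 hv
      have hr0 : r ≠ 0 := by rintro rfl; exact hr (IsSquare.zero)
      rw [← quadraticChar_one_iff_isSquare (mul_ne_zero hr0 h0), map_mul,
        quadraticChar_neg_one_iff_not_isSquare.2 h, quadraticChar_neg_one_iff_not_isSquare.2 hr]
      norm_num
    obtain ⟨s, hs, hs2⟩ := zp_sq_of_mod p hp (u * v) (huu.mul hv) this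
    obtain ⟨w, rfl⟩ := hv
    refine ⟨s * ↑w⁻¹, hs.mul (Units.isUnit _), ?_⟩
    rw [mul_pow, ← hs2]
    calc (w : ℤ_[p]) * (u * w * (↑w⁻¹) ^ 2) = u * (w * ↑w⁻¹) ^ 2 := by ring
      _ = u := by simp

theorem zp_repr_one (hp : p ≠ 2) (a b : ℤ_[p]) (ha : IsUnit a) (hb : IsUnit b) :
    ∃ x y : ℤ_[p], a * x ^ 2 + b * y ^ 2 = 1 := by
  have ha0 := (zp_unit_iff p a).1 ha
  have hb0 := (zp_unit_iff p b).1 hb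
  obtain ⟨x, y, hxy⟩ := FiniteField.exists_root_sum_quadratic (R := ZMod p)
    (f := Polynomial.C (PadicInt.toZMod a) * Polynomial.X ^ 2 + Polynomial.C 0 * Polynomial.X
      + Polynomial.C (-1))
    (g := Polynomial.C (PadicInt.toZMod b) * Polynomial.X ^ 2 + Polynomial.C 0 * Polynomial.X
      + Polynomial.C 0)
    (Polynomial.degree_quadratic ha0) (Polynomial.degree_quadratic hb0)
    (by rw [ZMod.card]; exact Nat.odd_iff.1 ((Fact.out : p.Prime).odd_of_ne_two hp))
  simp only [Polynomial.eval_add, Polynomial.eval_mul, Polynomial.eval_C, Polynomial.eval_pow,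
    Polynomial.eval_X] at hxy
  have key : ∀ a b : ℤ_[p], IsUnit a → ∀ x y : ZMod p, x ≠ 0 →
      PadicInt.toZMod a * x ^ 2 + PadicInt.toZMod b * y ^ 2 = 1 →
      ∃ x y : ℤ_[p], a * x ^ 2 + b * y ^ 2 = 1 := by
    clear hxy x y ha0 hb0 ha hb a b
    intro a b ha x y hx hxy
    obtain ⟨y', rfl⟩ := ZMod.ringHom_surjective (PadicInt.toZMod (p := p)) y
    have ha0 := (zp_unit_iff p a).1 ha
    obtain ⟨w, rfl⟩ := ha
    have e : PadicInt.toZMod ((↑w⁻¹ : ℤ_[p]) * (1 - b * y' ^ 2)) = x ^ 2 := by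
      apply mul_left_cancel₀ ha0
      rw [← map_mul, ← mul_assoc]
      simp only [Units.mul_inv, one_mul, map_sub, map_one, map_mul, map_pow]
      linear_combination -hxy
    obtain ⟨s, -, hs⟩ := zp_sq_of_mod p hp ((↑w⁻¹ : ℤ_[p]) * (1 - b * y' ^ 2))
      (by rw [zp_unit_iff, e]; exact pow_ne_zero 2 hx) (by rw [e]; exact IsSquare.sq x)
    refine ⟨s, y', ?_⟩
    rw [← hs, ← mul_assoc]
    simp
  by_cases hx : x = 0
  · have hy : y ≠ 0 := by rintro rfl; simp [hx] at hxy
    obtain ⟨y', x', h⟩ := key b a hb y x hy (by linear_combination hxy)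
    exact ⟨x', y', by linear_combination h⟩
  · exact key a b ha x y hx (by linear_combination hxy)

end Arith

theorem orth_basis_aux {R : Type*} [CommRing R] [IsDomain R] [IsDiscreteValuationRing R]
    (h2 : IsUnit (2 : R)) (n : ℕ) : ∀ (M : Type _) [AddCommGroup M] [Module R M]
    [Module.Finite R M] [Module.Free R M] (B : LinearMap.BilinForm R M),
    (∀ x y, B x y = B y x) → Module.finrank R M = n →
    ∃ b : Module.Basis (Fin n) R M, ∀ i j, i ≠ j → B (b i) (b j) = 0 := by
  induction n with
  | zero =>
    intro M _ _ _ _ B hB hn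
    exact ⟨Module.finBasisOfFinrankEq R M hn, fun i => i.elim0⟩
  | succ n ih =>
    intro M _ _ _ _ B hB hn
    by_cases h0 : ∀ x, B x x = 0
    · refine ⟨Module.finBasisOfFinrankEq R M hn, fun i j _ => ?_⟩
      generalize (Module.finBasisOfFinrankEq R M hn) i = x
      generalize (Module.finBasisOfFinrankEq R M hn) j = y
      have := h0 (x + y)
      simp only [map_add, LinearMap.add_apply, h0, hB y x] at this
      have h : 2 * B x y = 0 := by linear_combination this
      exact h2.mul_right_eq_zero.1 h
    · push Not at h0
      obtain ⟨x₀, hx₀⟩ := h0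
      obtain ⟨I, ⟨x, rfl⟩, hI⟩ := (set_has_maximal_iff_noetherian (R := R) (M := R)).2 inferInstance
        (Set.range fun x => Ideal.span {B x x}) ⟨_, x₀, rfl⟩
      have hdvd : ∀ y, B x x ∣ B y y := by
        intro y
        rcases ValuationRing.dvd_total (B x x) (B y y) with h | h
        · exact h
        · have h1 : Ideal.span {B x x} ≤ Ideal.span {B y y} := by
            rwa [Ideal.span_singleton_le_span_singleton]
          have h3 := hI _ ⟨y, rfl⟩
          have : Ideal.span {B y y} ≤ Ideal.span {B x x} := by
            by_contra hc
            exact h3 (lt_of_le_not_ge h1 hc)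
          rwa [Ideal.span_singleton_le_span_singleton] at this
      have hx : B x x ≠ 0 := by
        intro h
        have := hdvd x₀
        rw [h, zero_dvd_iff] at this
        exact hx₀ this
      have hd : ∀ y, B x x ∣ B x y := by
        intro y
        have h := hdvd (x + y)
        simp only [map_add, LinearMap.add_apply, hB y x] at h
        have : B x x ∣ 2 * B x y := by
          have e : 2 * B x y = (B x x + B x y + (B x y + B y y)) - B x x - B y y := by ring
          rw [e]
          exact dvd_sub (dvd_sub h dvd_rfl) (hdvd y)
        exact (h2.dvd_mul_left).1 this
      let N : Submodule R M := LinearMap.ker (B x)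
      have hNm : ∀ z, z ∈ N ↔ B x z = 0 := fun z => LinearMap.mem_ker
      have hli : ∀ (c : R), ∀ z ∈ N, c • x + z = 0 → c = 0 := by
        intro c z hz h
        have := congrArg (B x) h
        rw [map_add, map_smul, (hNm z).1 hz, map_zero, add_zero, smul_eq_mul] at this
        exact (mul_eq_zero.1 this).resolve_right hx
      have hsp : ∀ z : M, ∃ c : R, z + c • x ∈ N := by
        intro z
        obtain ⟨c, hc⟩ := hd z
        refine ⟨-c, ?_⟩
        rw [hNm, map_add, map_smul, hc, smul_eq_mul]; ring
      have hNn : Module.finrank R N = n := by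
        have b := Module.finBasis R N
        have := Module.finrank_eq_card_basis (Module.Basis.mkFinCons x b hli hsp)
        rw [hn, Fintype.card_fin] at this
        omega
      obtain ⟨b, hb⟩ := ih N (B.restrict N) (fun x y => hB _ _) hNn
      refine ⟨Module.Basis.mkFinCons x b hli hsp, fun i j => ?_⟩
      rw [Module.Basis.coe_mkFinCons]
      refine Fin.cases ?_ (fun i => ?_) i
      · refine Fin.cases (fun h => absurd rfl h) (fun j _ => ?_) j
        simp [(hNm _).1 (b j).2]
      · refine Fin.cases (fun _ => ?_) (fun j h => ?_) j
        · rw [hB]; simp [(hNm _).1 (b i).2]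
        · simpa using hb i j (fun e => h (by rw [e]))

theorem pair_step {ι : Type*} [DecidableEq ι] (B : LinearMap.BilinForm ℚ_[p] V)
    (hB : ∀ x y, B x y = B y x) (e : ι → V) (hO : ∀ k l, k ≠ l → B (e k) (e l) = 0)
    (i j : ι) (hij : i ≠ j) (c : ℚ_[p]) (a b x y : ℤ_[p])
    (hi : B (e i) (e i) = c * a) (hj : B (e j) (e j) = c * b)
    (h : a * x ^ 2 + b * y ^ 2 = 1) :
    ∃ e' : ι → V, Submodule.span ℤ_[p] (Set.range e') = Submodule.span ℤ_[p] (Set.range e) ∧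
      (∀ k l, k ≠ l → B (e' k) (e' l) = 0) ∧ B (e' i) (e' i) = c ∧
      B (e' j) (e' j) = c * (a * b : ℤ_[p]) ∧ ∀ k, k ≠ i → k ≠ j → e' k = e k := by
  have hsm : ∀ (z : ℤ_[p]) (v : V), z • v = (z : ℚ_[p]) • v := fun z v =>
    (algebraMap_smul ℚ_[p] z v).symm
  have hQ : (a : ℚ_[p]) * x ^ 2 + b * y ^ 2 = 1 := by exact_mod_cast congrArg ((↑) : ℤ_[p] → ℚ_[p]) h
  set f : V := x • e i + y • e j with hf
  set g : V := (-(b * y)) • e i + (a * x) • e j with hg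
  have hij0 := hO i j hij
  have hji0 := hO j i hij.symm
  let e' : ι → V := Function.update (Function.update e i f) j g
  have ei' : e' i = f := by simp [e', hij]
  have ej' : e' j = g := by simp [e']
  have ek' : ∀ k, k ≠ i → k ≠ j → e' k = e k := fun k h1 h2 => by simp [e', h1, h2]
  have hff : B f f = c := by
    simp only [hf, hsm, map_add, map_smul, LinearMap.add_apply, LinearMap.smul_apply, smul_eq_mul,
      hij0, hji0, hi, hj]
    linear_combination c * hQ
  have hgg : B g g = c * (a * b : ℤ_[p]) := by
    simp only [hg, hsm, map_add, map_smul, LinearMap.add_apply, LinearMap.smul_apply, smul_eq_mul,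
      hij0, hji0, hi, hj]
    push_cast
    linear_combination (c * a * b) * hQ
  have hfg : B f g = 0 := by
    simp only [hf, hg, hsm, map_add, map_smul, LinearMap.add_apply, LinearMap.smul_apply,
      smul_eq_mul, hij0, hji0, hi, hj]
    push_cast
    ring
  have hfk : ∀ k, k ≠ i → k ≠ j → B f (e k) = 0 := by
    intro k h1 h2
    simp [hf, hsm, hO i k h1.symm, hO j k h2.symm]
  have hgk : ∀ k, k ≠ i → k ≠ j → B g (e k) = 0 := by
    intro k h1 h2
    simp [hg, hsm, hO i k h1.symm, hO j k h2.symm]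
  refine ⟨e', ?_, ?_, by rw [ei', hff], by rw [ej', hgg], ek'⟩
  · apply le_antisymm
    · rw [Submodule.span_le]
      rintro _ ⟨k, rfl⟩
      have hm : ∀ k, e k ∈ Submodule.span ℤ_[p] (Set.range e) :=
        fun k => Submodule.subset_span ⟨k, rfl⟩
      by_cases h1 : k = i
      · subst h1; rw [ei']
        exact add_mem (Submodule.smul_mem _ _ (hm _)) (Submodule.smul_mem _ _ (hm _))
      · by_cases h2 : k = j
        · subst h2; rw [ej']
          exact add_mem (Submodule.smul_mem _ _ (hm _)) (Submodule.smul_mem _ _ (hm _))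
        · rw [ek' k h1 h2]; exact hm k
    · rw [Submodule.span_le]
      rintro _ ⟨k, rfl⟩
      have hm : ∀ k, e' k ∈ Submodule.span ℤ_[p] (Set.range e') :=
        fun k => Submodule.subset_span ⟨k, rfl⟩
      by_cases h1 : k = i
      · subst h1
        have : e k = (a * x) • f + (-y) • g := by
          have : (a * x) • f + (-y) • g = (a * x ^ 2 + b * y ^ 2) • e k := by
            rw [hf, hg]; module
          rw [this, h, one_smul]
        rw [this, ← ei', ← ej']
        exact add_mem (Submodule.smul_mem _ _ (hm _)) (Submodule.smul_mem _ _ (hm _))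
      · by_cases h2 : k = j
        · subst h2
          have : e k = (b * y) • f + x • g := by
            have : (b * y) • f + x • g = (a * x ^ 2 + b * y ^ 2) • e k := by
              rw [hf, hg]; module
            rw [this, h, one_smul]
          rw [this, ← ei', ← ej']
          exact add_mem (Submodule.smul_mem _ _ (hm _)) (Submodule.smul_mem _ _ (hm _))
        · rw [← ek' k h1 h2]; exact hm k
  · intro k l hkl
    by_cases h1 : k = i
    · subst h1; rw [ei']
      by_cases h2 : l = j
      · subst h2; rw [ej', hfg]
      · rw [ek' l hkl.symm h2, hfk l hkl.symm h2]
    · by_cases h2 : k = j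
      · subst h2; rw [ej']
        by_cases h3 : l = i
        · subst h3; rw [ei', hB, hfg]
        · rw [ek' l h3 hkl.symm, hgk l h3 hkl.symm]
      · rw [ek' k h1 h2]
        by_cases h3 : l = i
        · subst h3; rw [ei', hB, hfk k h1 h2]
        · by_cases h4 : l = j
          · subst h4; rw [ej', hB, hgk k h1 h2]
          · rw [ek' l h3 h4, hO k l hkl]

theorem unit_normalize (hp : p ≠ 2) {ι : Type*} [DecidableEq ι] (B : LinearMap.BilinForm ℚ_[p] V)
    (hB : ∀ x y, B x y = B y x) (e : ι → V) (hO : ∀ k l, k ≠ l → B (e k) (e l) = 0)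
    (j : ι) (hj : ∃ a : ℤ_[p], IsUnit a ∧ B (e j) (e j) = a) (S : Finset ι) :
    j ∉ S → (∀ i ∈ S, ∃ a : ℤ_[p], IsUnit a ∧ B (e i) (e i) = a) →
    ∃ e' : ι → V, Submodule.span ℤ_[p] (Set.range e') = Submodule.span ℤ_[p] (Set.range e) ∧
      (∀ k l, k ≠ l → B (e' k) (e' l) = 0) ∧ (∀ i ∈ S, B (e' i) (e' i) = 1) ∧
      (∃ a : ℤ_[p], IsUnit a ∧ B (e' j) (e' j) = a) ∧
      ∀ k, k ∉ S → k ≠ j → e' k = e k := by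
  induction S using Finset.induction_on with
  | empty => intro _ _; exact ⟨e, rfl, hO, by simp, hj, fun _ _ _ => rfl⟩
  | insert i S hi ih =>
    intro hjS hS
    obtain ⟨e', h1, h2, h3, ⟨b, hb, h4⟩, h5⟩ := ih (fun h => hjS (Finset.mem_insert_of_mem h))
      (fun k hk => hS k (Finset.mem_insert_of_mem hk))
    obtain ⟨a, ha, hai⟩ := hS i (Finset.mem_insert_self _ _)
    have hij : i ≠ j := by rintro rfl; exact hjS (Finset.mem_insert_self _ _)
    rw [← h5 i hi hij] at hai
    obtain ⟨x, y, hxy⟩ := zp_repr_one p hp a b ha hb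
    obtain ⟨f, g1, g2, g3, g4, g5⟩ := pair_step p B hB e' h2 i j hij 1 a b x y
      (by rw [hai, one_mul]) (by rw [h4, one_mul]) hxy
    refine ⟨f, g1.trans h1, g2, ?_, ⟨a * b, ha.mul hb, by rw [g4, one_mul]⟩, ?_⟩
    · intro k hk
      rcases Finset.mem_insert.1 hk with rfl | hk2
      · exact g3
      · rw [g5 k (by rintro rfl; exact hi hk2)
          (by rintro rfl; exact hjS (Finset.mem_insert_of_mem hk2)), h3 k hk2]
    · intro k hk hkj
      rw [g5 k (by rintro rfl; exact hk (Finset.mem_insert_self _ _)) hkj,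
        h5 k (fun h => hk (Finset.mem_insert_of_mem h)) hkj]

theorem relIndex_covBy (A C : Submodule ℤ_[p] V) (h : A ⋖ C) :
    A.toAddSubgroup.relIndex C.toAddSubgroup = p := by
  have hs := (covBy_iff_quot_is_simple h.le).1 h
  obtain ⟨I, hI, ⟨f⟩⟩ := isSimpleModule_iff_quot_maximal.1 hs
  obtain rfl := IsLocalRing.eq_maximalIdeal hI
  have h1 : Nat.card (IsLocalRing.ResidueField ℤ_[p]) = p := by
    rw [Nat.card_congr (PadicInt.residueField (p := p)).toEquiv, Nat.card_zmod]
  have h2 := Nat.card_congr f.toEquiv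
  exact h2.trans h1

theorem zpDual_mem (Q : QuadraticForm ℚ_[p] V) (Λ : Submodule ℤ_[p] V) (x : V) :
    x ∈ zpDual p Q Λ ↔ ∀ y ∈ Λ, ∃ z : ℤ_[p], (z : ℚ_[p]) = polarBilin Q x y := by
  unfold zpDual
  simp only [LinearMap.BilinForm.mem_dualSubmodule, Submodule.mem_one]
  rfl

theorem typeTwo_basis (hp : p ≠ 2) (Q : QuadraticForm ℚ_[p] V)
    (hQ : LinearMap.BilinForm.Nondegenerate (QuadraticMap.polarBilin Q))
    (n : ℕ) (hn : Module.finrank ℚ_[p] V = n)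
    (Λ : Submodule ℤ_[p] V) (hΛ : IsTypeTwoVertexLattice p Q Λ) :
    ∃ (e : Fin n → V) (T : Finset (Fin n)), Submodule.span ℤ_[p] (Set.range e) = Λ ∧
      (∀ k l, k ≠ l → polarBilin Q (e k) (e l) = 0) ∧ T.card = 2 ∧
      (∀ i ∈ T, ∃ a : ℤ_[p], IsUnit a ∧ polarBilin Q (e i) (e i) = (p : ℚ_[p])⁻¹ * a) ∧
      (∀ i ∉ T, ∃ a : ℤ_[p], IsUnit a ∧ polarBilin Q (e i) (e i) = a) := by
  classical
  obtain ⟨⟨hfg, hspan⟩, hpΛ, hle, f, hf0, hf2, hcov⟩ := hΛ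
  have hsm : ∀ (z : ℤ_[p]) (v : V), z • v = (z : ℚ_[p]) • v := fun z v =>
    (algebraMap_smul ℚ_[p] z v).symm
  have hp0 : (p : ℚ_[p]) ≠ 0 := by exact_mod_cast (Fact.out : p.Prime).ne_zero
  set B := polarBilin Q with hBdef
  have hsymm : ∀ x y, B x y = B y x := fun x y => by
    simp [hBdef, QuadraticMap.polar_comm]
  have hlat : Submodule.IsLattice ℚ_[p] Λ := ⟨hfg, hspan⟩
  have hint : ∀ x y : Λ, ‖(p : ℚ_[p]) * B x y‖ ≤ 1 := by
    intro x y
    obtain ⟨z, hz⟩ := (zpDual_mem p Q Λ _).1 (hpΛ x x.2) y y.2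
    rw [hsm, map_smul, LinearMap.smul_apply, smul_eq_mul] at hz
    have : (p : ℚ_[p]) * B x y = z := by rw [hz]; simp [hBdef]
    rw [this]; exact z.2
  let B' : LinearMap.BilinForm ℤ_[p] Λ := LinearMap.mk₂ ℤ_[p]
    (fun x y => ⟨(p : ℚ_[p]) * B x y, hint x y⟩)
    (fun x x' y => by
      apply Subtype.ext
      change (p : ℚ_[p]) * B (x + x') y = p * B x y + p * B x' y
      simp [mul_add])
    (fun c x y => by
      apply Subtype.ext
      change (p : ℚ_[p]) * B (c • (x : V)) y = c * (p * B x y)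
      simp [hsm]; ring)
    (fun x y y' => by
      apply Subtype.ext
      change (p : ℚ_[p]) * B x (y + y') = p * B x y + p * B x y'
      simp [mul_add])
    (fun c x y => by
      apply Subtype.ext
      change (p : ℚ_[p]) * B x (c • (y : V)) = c * (p * B x y)
      simp [hsm]; ring)
  have hB' : ∀ x y, ((B' x y : ℤ_[p]) : ℚ_[p]) = (p : ℚ_[p]) * B x y := fun x y => rfl
  have hfr : Module.finrank ℤ_[p] Λ = n := by
    have := Submodule.IsLattice.rank' (K := ℚ_[p]) Λ
    rw [← hn, Module.finrank, Module.finrank, this]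
  obtain ⟨b, hb⟩ := orth_basis_aux (zp_two_unit p hp) n Λ B'
    (fun x y => by apply Subtype.ext; rw [hB', hB', hsymm]) hfr
  let e : Fin n → V := fun i => b i
  have hO : ∀ k l, k ≠ l → B (e k) (e l) = 0 := by
    intro k l hkl
    have := congrArg ((↑) : ℤ_[p] → ℚ_[p]) (hb k l hkl)
    rw [hB'] at this
    exact (mul_eq_zero.1 (by simpa using this)).resolve_left hp0
  let E := b.extendOfIsLattice ℚ_[p]
  have hE : ∀ i, E i = e i := fun i => by simp [E, e]
  have hBE : ∀ (i : Fin n) (y : Λ), B (e i) y = B (e i) (e i) * (b.repr y i : ℤ_[p]) := by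
    intro i y
    have hy : (y : V) = ∑ j, (b.repr y j) • e j := by
      have := congrArg (Submodule.subtype Λ) (b.sum_repr y)
      rw [map_sum] at this
      exact this.symm
    rw [hy, map_sum, Finset.sum_eq_single i]
    · rw [hsm, map_smul, smul_eq_mul, mul_comm]
    · intro j _ hj
      rw [hsm, map_smul, hO i j hj.symm, smul_zero]
    · simp
  have hw0 : ∀ i, B (e i) (e i) ≠ 0 := by
    intro i h
    have : e i = 0 := by
      apply hQ.1
      intro y
      rw [← E.sum_repr y, map_sum]
      apply Finset.sum_eq_zero
      intro j _
      rw [map_smul, hE]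
      by_cases hij : i = j
      · subst hij; rw [h, smul_zero]
      · rw [hO i j hij, smul_zero]
    rw [← hE] at this
    exact E.ne_zero i this
  have hdich : ∀ i, (∃ a : ℤ_[p], IsUnit a ∧ B (e i) (e i) = (p : ℚ_[p])⁻¹ * a) ∨
      (∃ a : ℤ_[p], IsUnit a ∧ B (e i) (e i) = a) := by
    intro i
    have hmem : (B (e i) (e i))⁻¹ • e i ∈ Λ := by
      apply hle
      rw [zpDual_mem]
      intro y hy
      refine ⟨b.repr ⟨y, hy⟩ i, ?_⟩
      have := hBE i ⟨y, hy⟩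
      rw [map_smul, LinearMap.smul_apply, ← hBdef, this, smul_eq_mul, inv_mul_cancel_left₀ (hw0 i)]
    have h1 := hBE i ⟨_, hmem⟩
    simp only [map_smul, smul_eq_mul] at h1
    rw [inv_mul_cancel₀ (hw0 i)] at h1
    set z' := b.repr ⟨_, hmem⟩ i
    have hz : ((B' (b i) (b i) : ℤ_[p]) : ℚ_[p]) = p * B (e i) (e i) := rfl
    set z := B' (b i) (b i)
    have hzz : (p : ℤ_[p]) = z * z' := by
      apply Subtype.ext
      push_cast
      rw [hz, mul_assoc, ← h1, mul_one]
    rcases (PadicInt.prime_p (p := p)).irreducible.isUnit_or_isUnit hzz with h | h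
    · left
      exact ⟨z, h, by rw [hz, inv_mul_cancel_left₀ hp0]⟩
    · right
      obtain ⟨u, hu⟩ := h
      refine ⟨((u⁻¹ : ℤ_[p]ˣ) : ℤ_[p]), Units.isUnit _, ?_⟩
      have h3 : (z' : ℚ_[p]) * ((u⁻¹ : ℤ_[p]ˣ) : ℤ_[p]) = 1 := by
        rw [← hu]
        exact_mod_cast congrArg ((↑) : ℤ_[p] → ℚ_[p]) (Units.mul_inv u)
      calc B (e i) (e i) = B (e i) (e i) * (z' * ((u⁻¹ : ℤ_[p]ˣ) : ℤ_[p])) := by rw [h3, mul_one]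
        _ = (B (e i) (e i) * z') * ((u⁻¹ : ℤ_[p]ˣ) : ℤ_[p]) := by ring
        _ = _ := by rw [← h1, one_mul]
  let T : Finset (Fin n) :=
    Finset.univ.filter fun i => ∃ a : ℤ_[p], IsUnit a ∧ B (e i) (e i) = (p : ℚ_[p])⁻¹ * a
  have hT : ∀ i, i ∈ T ↔ ∃ a : ℤ_[p], IsUnit a ∧ B (e i) (e i) = (p : ℚ_[p])⁻¹ * a := by
    intro i; simp [T]
  refine ⟨e, T, ?_, hO, ?_, fun i hi => (hT i).1 hi, fun i hi =>
    (hdich i).resolve_left fun h => hi ((hT i).2 h)⟩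
  · have := b.span_eq
    have h2 := congrArg (Submodule.map Λ.subtype) this
    rw [Submodule.map_span, Submodule.map_top, Submodule.range_subtype, ← Set.range_comp] at h2
    exact h2
  · -- counting
    have hz0 : ∀ c : ℤ_[p], PadicInt.toZMod c = 0 ↔ ∃ d : ℤ_[p], c = p * d := by
      intro c
      rw [← RingHom.mem_ker, PadicInt.ker_toZMod, PadicInt.maximalIdeal_eq_span_p,
        Ideal.mem_span_singleton]
      rfl
    let φ : Λ.toAddSubgroup →+ (T → ZMod p) :=
      { toFun := fun x i => PadicInt.toZMod (b.repr (x : Λ) i)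
        map_zero' := by
          funext i
          change PadicInt.toZMod (b.repr (0 : Λ) i) = 0
          simp
        map_add' := fun x y => by
          funext i
          change PadicInt.toZMod (b.repr ((x : Λ) + (y : Λ) : Λ) i) = _
          rw [map_add, Finsupp.add_apply, map_add]; rfl }
    have hφ : ∀ (x : Λ) i, φ x i = PadicInt.toZMod (b.repr x i) := fun x i => rfl
    have hker : φ.ker = (zpDual p Q Λ).toAddSubgroup.addSubgroupOf Λ.toAddSubgroup := by
      ext x
      obtain ⟨x, hx⟩ := x
      rw [AddMonoidHom.mem_ker, AddSubgroup.mem_addSubgroupOf]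
      change φ (⟨x, hx⟩ : Λ) = 0 ↔ x ∈ zpDual p Q Λ
      constructor
      · intro h
        have h' : ∀ i, ∃ d : ℤ_[p],
            B (e i) (e i) * (b.repr ⟨x, hx⟩ i : ℤ_[p]) = (d : ℤ_[p]) := by
          intro i
          by_cases hi : i ∈ T
          · obtain ⟨a, -, ha⟩ := (hT i).1 hi
            have h3 := congrFun h ⟨i, hi⟩
            rw [hφ] at h3
            obtain ⟨d, hd⟩ := (hz0 _).1 h3
            refine ⟨a * d, ?_⟩
            simp only [hd]
            rw [ha]
            push_cast
            field_simp
          · obtain ⟨a, -, ha⟩ := (hdich i).resolve_left fun h => hi ((hT i).2 h)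
            exact ⟨a * b.repr ⟨x, hx⟩ i, by rw [ha]; push_cast; rfl⟩
        choose d hd using h'
        rw [zpDual_mem]
        intro y hy
        refine ⟨∑ i, d i * b.repr ⟨y, hy⟩ i, ?_⟩
        have hyy : (y : V) = ∑ j, (b.repr ⟨y, hy⟩ j) • e j := by
          have := congrArg (Submodule.subtype Λ) (b.sum_repr ⟨y, hy⟩)
          rw [map_sum] at this
          exact this.symm
        conv_rhs => rw [hyy]
        change PadicInt.Coe.ringHom _ = _
        rw [map_sum, map_sum]
        apply Finset.sum_congr rfl
        intro i _
        rw [hsm, map_smul, ← hBdef, hsymm, hBE i ⟨x, hx⟩, hd, smul_eq_mul, mul_comm, map_mul]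
        rfl
      · intro h
        funext i
        rw [hφ]
        obtain ⟨a, ha, hai⟩ := (hT i).1 i.2
        obtain ⟨z, hz⟩ := (zpDual_mem p Q Λ x).1 h (e i) (b i).2
        rw [← hBdef, hsymm, hBE i ⟨x, hx⟩, hai] at hz
        have h4 : (a : ℤ_[p]) * b.repr ⟨x, hx⟩ i = p * z := by
          apply Subtype.ext
          push_cast
          rw [hz]; field_simp
        have h5 : PadicInt.toZMod (a * b.repr ⟨x, hx⟩ i) = 0 := (hz0 _).2 ⟨z, h4⟩
        rw [map_mul] at h5
        exact (mul_eq_zero.1 h5).resolve_left ((zp_unit_iff p a).1 ha)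
    have hsurj : Function.Surjective φ := by
      intro t
      choose c hc using fun i : T => ZMod.ringHom_surjective (PadicInt.toZMod (p := p)) (t i)
      refine ⟨(∑ i : T, c i • b i : Λ), ?_⟩
      funext i
      rw [hφ, ← hc i]
      congr 1
      simp [Finsupp.single_apply]
    have hcard : (zpDual p Q Λ).toAddSubgroup.relIndex Λ.toAddSubgroup = p ^ T.card := by
      rw [AddSubgroup.relIndex, ← hker, AddSubgroup.index_ker, AddMonoidHom.range_eq_top.2 hsurj]
      rw [AddSubgroup.card_top]
      simp
    have h01 := hcov 0
    have h12 := hcov 1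
    have e1 := relIndex_covBy p _ _ h01
    have e2 := relIndex_covBy p _ _ h12
    have e3 := AddSubgroup.relIndex_mul_relIndex (f 0).toAddSubgroup (f 1).toAddSubgroup
      (f 2).toAddSubgroup h01.le h12.le
    change (f 0).toAddSubgroup.relIndex (f 1).toAddSubgroup = p at e1
    change (f 1).toAddSubgroup.relIndex (f 2).toAddSubgroup = p at e2
    change f 2 = Λ at hf2
    rw [e1, e2, hf0, hf2, hcard, ← pow_two] at e3
    exact (Nat.pow_right_injective (Fact.out : p.Prime).two_le e3).symm

theorem bilin_diag {K M ι : Type*} [Field K] [AddCommGroup M] [Module K M] [Fintype ι]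
    (B : LinearMap.BilinForm K M) (e : Module.Basis ι K M)
    (hO : ∀ k l, k ≠ l → B (e k) (e l) = 0) (x y : M) :
    B x y = ∑ i, B (e i) (e i) * e.repr x i * e.repr y i := by
  classical
  conv_lhs => rw [← e.sum_repr x, ← e.sum_repr y]
  simp only [map_sum, map_smul, LinearMap.sum_apply, LinearMap.smul_apply, smul_eq_mul]
  apply Finset.sum_congr rfl
  intro i _
  rw [Finset.sum_eq_single i]
  · ring
  · intro j _ hj
    rw [hO j i hj]; ring
  · simp

theorem pairing_int {R K M : Type*} [CommRing R] [Field K] [Algebra R K] [AddCommGroup M]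
    [Module K M] {k : ℕ} (B : LinearMap.BilinForm K M) (e : Module.Basis (Fin 2 ⊕ Fin k) K M)
    (hO : ∀ k l, k ≠ l → B (e k) (e l) = 0) (π u t r : R) (hu : u = t ^ 2 - π * r)
    (hπ : algebraMap R K π ≠ 0)
    (h0 : B (e (Sum.inl 0)) (e (Sum.inl 0)) = (algebraMap R K π)⁻¹)
    (h1 : B (e (Sum.inl 1)) (e (Sum.inl 1)) = (algebraMap R K π)⁻¹ * algebraMap R K (-u))
    (a : Fin k → R) (ha : ∀ i, B (e (Sum.inr i)) (e (Sum.inr i)) = algebraMap R K (a i))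
    (x y : M) (ξ η : Fin 2 ⊕ Fin k → R) (hx : ∀ i, algebraMap R K (ξ i) = e.repr x i)
    (hy : ∀ i, algebraMap R K (η i) = e.repr y i)
    (hx0 : ∃ z, ξ (Sum.inl 0) - t * ξ (Sum.inl 1) = π * z)
    (hy0 : ∃ z, η (Sum.inl 0) - t * η (Sum.inl 1) = π * z) :
    ∃ c, algebraMap R K c = B x y := by
  obtain ⟨z, hz⟩ := hx0
  obtain ⟨z', hz'⟩ := hy0
  set ξ0 := ξ (Sum.inl 0)
  set ξ1 := ξ (Sum.inl 1)
  set η0 := η (Sum.inl 0)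
  set η1 := η (Sum.inl 1)
  have key : ξ0 * η0 + (-u) * ξ1 * η1 =
      π * (t * ξ1 * z' + t * η1 * z + π * z * z' + r * ξ1 * η1) := by
    rw [hu, sub_eq_iff_eq_add.1 hz, sub_eq_iff_eq_add.1 hz']; ring
  refine ⟨(t * ξ1 * z' + t * η1 * z + π * z * z' + r * ξ1 * η1) +
    ∑ i, a i * ξ (Sum.inr i) * η (Sum.inr i), ?_⟩
  rw [bilin_diag B e hO x y, Fintype.sum_sum_type, Fin.sum_univ_two, h0, h1]
  simp only [ha, ← hx, ← hy]
  rw [map_add (algebraMap R K), map_sum]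
  congr 1
  · have := congrArg (algebraMap R K) key
    rw [map_mul (algebraMap R K) π] at this
    rw [← mul_right_inj' hπ, ← this]
    simp only [map_add, map_mul]
    field_simp
    rfl
  · simp only [map_mul]

theorem basis_of_span {ι : Type*} [Fintype ι] (e : ι → V) (Λ : Submodule ℤ_[p] V)
    (he : Submodule.span ℤ_[p] (Set.range e) = Λ)
    (hΛ : Submodule.span ℚ_[p] (Λ : Set V) = ⊤) (hc : Fintype.card ι = Module.finrank ℚ_[p] V) :
    ∃ E : Module.Basis ι ℚ_[p] V, (∀ i, E i = e i) ∧
      ∀ x, x ∈ Λ ↔ ∀ i, ∃ z : ℤ_[p], algebraMap ℤ_[p] ℚ_[p] z = E.repr x i := by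
  have htop : ⊤ ≤ Submodule.span ℚ_[p] (Set.range e) := by
    rw [← hΛ, Submodule.span_le, ← he]
    exact Submodule.span_le_restrictScalars ℤ_[p] ℚ_[p] (Set.range e)
  let E := basisOfTopLeSpanOfCardEqFinrank e htop hc
  have hE : ⇑E = e := coe_basisOfTopLeSpanOfCardEqFinrank e htop hc
  refine ⟨E, fun i => congrFun hE i, fun x => ?_⟩
  rw [← he, ← hE, Module.Basis.mem_span_iff_repr_mem]
  rfl

theorem unit_scale {ι : Type*} [DecidableEq ι] (e : ι → V) (i : ι) (s : ℤ_[p]) (hs : IsUnit s) :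
    Submodule.span ℤ_[p] (Set.range (Function.update e i (s • e i))) =
      Submodule.span ℤ_[p] (Set.range e) := by
  apply le_antisymm
  · rw [Submodule.span_le]
    rintro _ ⟨k, rfl⟩
    by_cases h : k = i
    · subst h
      rw [Function.update_self]
      exact Submodule.smul_mem _ _ (Submodule.subset_span ⟨k, rfl⟩)
    · rw [Function.update_of_ne h]
      exact Submodule.subset_span ⟨k, rfl⟩
  · rw [Submodule.span_le]
    rintro _ ⟨k, rfl⟩
    by_cases h : k = i
    · subst h
      obtain ⟨w, rfl⟩ := hs
      have : e k = ((w⁻¹ : ℤ_[p]ˣ) : ℤ_[p]) • Function.update e k ((w : ℤ_[p]) • e k) k := by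
        rw [Function.update_self, smul_smul, Units.inv_mul, one_smul]
      have h3 := Submodule.smul_mem _ ((w⁻¹ : ℤ_[p]ˣ) : ℤ_[p])
        (Submodule.subset_span (R := ℤ_[p]) (Set.mem_range_self
          (f := Function.update e k ((w : ℤ_[p]) • e k)) k))
      rwa [← this] at h3
    · have : e k = Function.update e i (s • e i) k := by rw [Function.update_of_ne h]
      rw [this]
      exact Submodule.subset_span ⟨k, rfl⟩

theorem exists_selfdual (Q : QuadraticForm ℚ_[p] V) (Λ : Submodule ℤ_[p] V)
    (hΛ : IsZpLattice p Λ) {k : ℕ} (e : Module.Basis (Fin 2 ⊕ Fin k) ℚ_[p] V)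
    (hm : ∀ x, x ∈ Λ ↔ ∀ i, ∃ z : ℤ_[p], algebraMap ℤ_[p] ℚ_[p] z = e.repr x i)
    (hO : ∀ k l, k ≠ l → polarBilin Q (e k) (e l) = 0) (s : ℤ_[p]) (hs : IsUnit s)
    (h0 : polarBilin Q (e (Sum.inl 0)) (e (Sum.inl 0)) = (algebraMap ℤ_[p] ℚ_[p] p)⁻¹)
    (h1 : polarBilin Q (e (Sum.inl 1)) (e (Sum.inl 1)) =
      (algebraMap ℤ_[p] ℚ_[p] p)⁻¹ * algebraMap ℤ_[p] ℚ_[p] (-(s ^ 2)))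
    (ha : ∀ i, ∃ a : ℤ_[p], IsUnit a ∧
      polarBilin Q (e (Sum.inr i)) (e (Sum.inr i)) = algebraMap ℤ_[p] ℚ_[p] a) :
    ∃ L : Submodule ℤ_[p] V, IsZpLattice p L ∧ zpDual p Q L = L := by
  classical
  have hsm : ∀ (z : ℤ_[p]) (v : V), z • v = (algebraMap ℤ_[p] ℚ_[p] z) • v := fun z v =>
    (algebraMap_smul ℚ_[p] z v).symm
  set α := algebraMap ℤ_[p] ℚ_[p] with hα
  have hinj : Function.Injective α := IsFractionRing.injective ℤ_[p] ℚ_[p]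
  have hp0' : (p : ℤ_[p]) ≠ 0 := by exact_mod_cast (Fact.out : p.Prime).ne_zero
  have hp0 : α p ≠ 0 := by
    rw [Ne, map_eq_zero_iff α hinj]; exact hp0'
  choose a hau ha using ha
  let L : Submodule ℤ_[p] V :=
    { carrier := {x | x ∈ Λ ∧ ∃ z : ℤ_[p],
        α (p * z) = e.repr x (Sum.inl 0) - α s * e.repr x (Sum.inl 1)}
      zero_mem' := ⟨zero_mem _, 0, by simp⟩
      add_mem' := by
        rintro x y ⟨hx, z, hz⟩ ⟨hy, z', hz'⟩
        refine ⟨add_mem hx hy, z + z', ?_⟩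
        rw [mul_add, map_add, hz, hz', map_add, Finsupp.add_apply, Finsupp.add_apply]; ring
      smul_mem' := by
        rintro c x ⟨hx, z, hz⟩
        refine ⟨Submodule.smul_mem _ _ hx, c * z, ?_⟩
        rw [mul_left_comm, map_mul, hz, hsm, map_smul, Finsupp.smul_apply, Finsupp.smul_apply,
          smul_eq_mul, smul_eq_mul]; ring }
  have hL : ∀ x, x ∈ L ↔ x ∈ Λ ∧ ∃ z : ℤ_[p],
        α (p * z) = e.repr x (Sum.inl 0) - α s * e.repr x (Sum.inl 1) := fun x => Iff.rfl
  have hLΛ : L ≤ Λ := fun x hx => hx.1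
  have hpL : ∀ x ∈ Λ, (p : ℤ_[p]) • x ∈ L := by
    intro x hx
    obtain ⟨z0, hz0⟩ := (hm x).1 hx (Sum.inl 0)
    obtain ⟨z1, hz1⟩ := (hm x).1 hx (Sum.inl 1)
    refine ⟨Submodule.smul_mem _ _ hx, z0 - s * z1, ?_⟩
    rw [hsm, map_smul, Finsupp.smul_apply, Finsupp.smul_apply, smul_eq_mul, smul_eq_mul, ← hz0,
      ← hz1]
    simp only [map_mul, map_sub]; ring
  have heΛ : ∀ i, e i ∈ Λ := by
    intro i
    rw [hm]
    intro j
    rw [e.repr_self, Finsupp.single_apply]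
    split_ifs
    · exact ⟨1, map_one _⟩
    · exact ⟨0, map_zero _⟩
  have hBL : ∀ x i, polarBilin Q x (e i) = polarBilin Q (e i) (e i) * e.repr x i := by
    intro x i
    rw [bilin_diag (polarBilin Q) e hO x (e i), Finset.sum_eq_single i]
    · simp
    · intro j _ hj
      simp [Finsupp.single_apply, hj.symm]
    · simp
  refine ⟨L, ⟨?_, ?_⟩, ?_⟩
  · have hf : IsNoetherian ℤ_[p] Λ := by
      have : Module.Finite ℤ_[p] Λ := Module.Finite.iff_fg.2 hΛ.1
      exact isNoetherian_of_isNoetherianRing_of_finite _ _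
    exact (isNoetherian_submodule.1 hf) L hLΛ
  · rw [eq_top_iff, ← hΛ.2, Submodule.span_le]
    intro x hx
    have h3 := Submodule.smul_mem (Submodule.span ℚ_[p] (L : Set V)) (α p)⁻¹
      (Submodule.subset_span (hpL x hx))
    rwa [hsm, smul_smul, inv_mul_cancel₀ hp0, one_smul] at h3
  · ext x
    rw [zpDual_mem]
    constructor
    · intro h
      obtain ⟨zv, hzv⟩ := h (s • e (Sum.inl 0) + e (Sum.inl 1)) (by
        refine ⟨add_mem (Submodule.smul_mem _ _ (heΛ _)) (heΛ _), 0, ?_⟩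
        simp [hsm, Finsupp.single_apply])
      obtain ⟨z0, hz0⟩ := h _ (hpL _ (heΛ (Sum.inl 0)))
      have hr : ∀ i, e (Sum.inr i) ∈ L := by
        intro i
        refine ⟨heΛ _, 0, ?_⟩
        simp [Finsupp.single_apply]
      change α zv = _ at hzv
      change α z0 = _ at hz0
      rw [hsm, map_smul, hBL, h0, smul_eq_mul, mul_inv_cancel_left₀ hp0] at hz0
      rw [hsm, map_add, map_smul, hBL x (Sum.inl 0), hBL x (Sum.inl 1), h0, h1,
        smul_eq_mul] at hzv
      obtain ⟨w, rfl⟩ := hs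
      have hsw : α w * α ((w⁻¹ : ℤ_[p]ˣ) : ℤ_[p]) = 1 := by
        rw [← map_mul, Units.mul_inv, map_one]
      have hdiff : α (p * (((w⁻¹ : ℤ_[p]ˣ) : ℤ_[p]) * zv)) =
          e.repr x (Sum.inl 0) - α w * e.repr x (Sum.inl 1) := by
        rw [map_mul, map_mul, hzv, map_neg, map_pow]
        field_simp
        linear_combination (e.repr x (Sum.inl 0) - α w * e.repr x (Sum.inl 1)) * hsw
      refine ⟨?_, _, hdiff⟩
      rw [hm]
      rintro (i | i)
      · fin_cases i
        · exact ⟨z0, hz0⟩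
        · refine ⟨((w⁻¹ : ℤ_[p]ˣ) : ℤ_[p]) * (z0 - p * (((w⁻¹ : ℤ_[p]ˣ) : ℤ_[p]) * zv)), ?_⟩
          rw [map_mul α ((w⁻¹ : ℤ_[p]ˣ) : ℤ_[p]), map_sub, hdiff, hz0]
          change _ = e.repr x (Sum.inl 1)
          linear_combination (e.repr x (Sum.inl 1)) * hsw
      · obtain ⟨z, hz⟩ := h _ (hr i)
        change α z = _ at hz
        rw [hBL, ha] at hz
        obtain ⟨b, hb⟩ := hau i
        refine ⟨((b⁻¹ : ℤ_[p]ˣ) : ℤ_[p]) * z, ?_⟩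
        rw [map_mul, hz, ← hb, ← mul_assoc, ← map_mul, Units.inv_mul, map_one, one_mul]
    · rintro ⟨hx, z, hz⟩ y ⟨hy, z', hz'⟩
      choose ξ hξ using (hm x).1 hx
      choose η hη using (hm y).1 hy
      obtain ⟨c, hc⟩ := pairing_int (polarBilin Q) e hO (p : ℤ_[p]) (s ^ 2) s 0 (by ring) hp0 h0 h1
        a ha x y ξ η hξ hη ⟨z, by apply hinj; rw [hz, map_sub, map_mul, hξ, hξ]⟩
        ⟨z', by apply hinj; rw [hz', map_sub, map_mul, hη, hη]⟩
      exact ⟨c, hc⟩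

theorem normal_form (hp : p ≠ 2) (Q : QuadraticForm ℚ_[p] V)
    (hQ : LinearMap.BilinForm.Nondegenerate (QuadraticMap.polarBilin Q))
    (hnosd : ¬ ∃ L : Submodule ℤ_[p] V, IsZpLattice p L ∧ zpDual p Q L = L)
    (m : ℕ) (hn : Module.finrank ℚ_[p] V = m + 3)
    (u : ℤ_[p]) (hu : ∀ v : ℤ_[p], IsUnit v →
    (∃ s : ℤ_[p], IsUnit s ∧ v = s ^ 2) ∨ (∃ s : ℤ_[p], IsUnit s ∧ v * s ^ 2 = u))
    (Λ : Submodule ℤ_[p] V) (hΛ : IsTypeTwoVertexLattice p Q Λ) :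
    ∃ e : Module.Basis (Fin 2 ⊕ Fin (m + 1)) ℚ_[p] V,
      (∀ x, x ∈ Λ ↔ ∀ i, ∃ z : ℤ_[p], algebraMap ℤ_[p] ℚ_[p] z = e.repr x i) ∧
      (∀ k l, k ≠ l → polarBilin Q (e k) (e l) = 0) ∧
      polarBilin Q (e (Sum.inl 0)) (e (Sum.inl 0)) = (algebraMap ℤ_[p] ℚ_[p] p)⁻¹ ∧
      polarBilin Q (e (Sum.inl 1)) (e (Sum.inl 1)) =
        (algebraMap ℤ_[p] ℚ_[p] p)⁻¹ * algebraMap ℤ_[p] ℚ_[p] (-u) ∧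
      (∃ a : ℤ_[p], IsUnit a ∧
        polarBilin Q (e (Sum.inr 0)) (e (Sum.inr 0)) = algebraMap ℤ_[p] ℚ_[p] a) ∧
      (∀ i, i ≠ 0 → polarBilin Q (e (Sum.inr i)) (e (Sum.inr i)) = 1) := by
  classical
  have hsymm : ∀ x y, polarBilin Q x y = polarBilin Q y x := fun x y => by
    simp [QuadraticMap.polar_comm]
  obtain ⟨e₀, T, hs₀, hO₀, hT, hT1, hT2⟩ := typeTwo_basis p hp Q hQ _ hn Λ hΛ
  have eq1 : Fin 2 ≃ {x // x ∈ T} := (Fintype.equivFinOfCardEq (by simp [hT])).symm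
  have eq2 : Fin (m + 1) ≃ {x // ¬ x ∈ T} := (Fintype.equivFinOfCardEq (by
    rw [Fintype.card_subtype_compl, Fintype.card_fin, Fintype.card_coe, hT]; omega)).symm
  let σ : Fin 2 ⊕ Fin (m + 1) ≃ Fin (m + 3) :=
    (Equiv.sumCongr eq1 eq2).trans (Equiv.sumCompl (fun x => x ∈ T))
  have hσ1 : ∀ i, σ (Sum.inl i) ∈ T := fun i => (eq1 i).2
  have hσ2 : ∀ i, σ (Sum.inr i) ∉ T := fun i => (eq2 i).2
  obtain ⟨e₁, hs₁, hO₁, hone, hunit, hrest⟩ := unit_normalize p hp (polarBilin Q) hsymm (e₀ ∘ σ)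
    (fun k l hkl => hO₀ _ _ (fun h => hkl (σ.injective h))) (Sum.inr 0) (hT2 _ (hσ2 0))
    (Finset.univ.image (fun i : Fin m => Sum.inr i.succ))
    (by simp [Fin.succ_ne_zero])
    (by
      intro i hi
      obtain ⟨j, -, rfl⟩ := Finset.mem_image.1 hi
      exact hT2 _ (hσ2 _))
  rw [Set.range_comp, σ.surjective.range_eq, Set.image_univ, hs₀] at hs₁
  have hl : ∀ i, e₁ (Sum.inl i) = e₀ (σ (Sum.inl i)) := fun i => hrest _ (by simp) (by simp)
  obtain ⟨a, hau, ha⟩ := hT1 _ (hσ1 0)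
  obtain ⟨b, hbu, hb⟩ := hT1 _ (hσ1 1)
  rw [← hl] at ha hb
  obtain ⟨x, y, hxy⟩ := zp_repr_one p hp a b hau hbu
  obtain ⟨e₂, hs₂, hO₂, h20, h21, h2r⟩ := pair_step p (polarBilin Q) hsymm e₁ hO₁ (Sum.inl 0)
    (Sum.inl 1) (by simp) _ a b x y ha hb hxy
  rw [hs₁] at hs₂
  have hcard : Fintype.card (Fin 2 ⊕ Fin (m + 1)) = Module.finrank ℚ_[p] V := by
    rw [hn]; simp; omega
  have hpe : algebraMap ℤ_[p] ℚ_[p] (p : ℤ_[p]) = (p : ℚ_[p]) := by simp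
  have hr2 : ∀ i, i ≠ 0 → polarBilin Q (e₂ (Sum.inr i)) (e₂ (Sum.inr i)) = 1 := by
    intro i hi
    rw [h2r _ (by simp) (by simp)]
    apply hone
    obtain ⟨j, rfl⟩ := Fin.exists_succ_eq_of_ne_zero hi
    exact Finset.mem_image_of_mem _ (Finset.mem_univ j)
  rw [← h2r _ (by simp) (by simp)] at hunit
  rcases hu (-(a * b)) (hau.mul hbu).neg with ⟨s, hs, hsq⟩ | ⟨s, hs, hsq⟩
  · exfalso
    obtain ⟨E, hE, hEm⟩ := basis_of_span p e₂ Λ hs₂ hΛ.1.2 hcard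
    refine hnosd (exists_selfdual p Q Λ hΛ.1 E hEm (by simpa only [hE] using hO₂) s hs
      (by rw [hE, h20, hpe]) (by rw [hE, h21, hpe, ← hsq, neg_neg]; rfl) ?_)
    intro i
    rw [hE]
    by_cases hi : i = 0
    · subst hi; exact hunit
    · exact ⟨1, isUnit_one, by rw [hr2 i hi, map_one]⟩
  · have hs₃ := (unit_scale p e₂ (Sum.inl 1) s hs).trans hs₂
    set e₃ := Function.update e₂ (Sum.inl 1) (s • e₂ (Sum.inl 1)) with he₃
    have h31 : e₃ (Sum.inl 1) = (s : ℚ_[p]) • e₂ (Sum.inl 1) := by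
      rw [he₃, Function.update_self]
      exact (algebraMap_smul ℚ_[p] s _).symm
    have h3k : ∀ k, k ≠ Sum.inl 1 → e₃ k = e₂ k := fun k hk => Function.update_of_ne hk _ _
    obtain ⟨E, hE, hEm⟩ := basis_of_span p e₃ Λ hs₃ hΛ.1.2 hcard
    refine ⟨E, hEm, ?_, ?_, ?_, ?_, ?_⟩
    · intro k l hkl
      rw [hE, hE]
      by_cases hk : k = Sum.inl 1
      · subst hk
        rw [h31, h3k l hkl.symm, map_smul, LinearMap.smul_apply, hO₂ _ _ hkl, smul_zero]
      · by_cases hl : l = Sum.inl 1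
        · subst hl
          rw [h31, h3k k hk, map_smul, hO₂ _ _ hkl, smul_zero]
        · rw [h3k k hk, h3k l hl, hO₂ _ _ hkl]
    · rw [hE, h3k _ (by simp), h20, hpe]
    · rw [hE, h31, map_smul, map_smul, LinearMap.smul_apply, h21, hpe, ← hsq]
      change _ = _ * ((-(-(a * b) * s ^ 2) : ℤ_[p]) : ℚ_[p])
      push_cast
      simp only [smul_eq_mul]
      ring
    · rw [hE, h3k _ (by simp)]; exact hunit
    · intro i hi
      rw [hE, h3k _ (by simp)]; exact hr2 i hi

theorem lattice_char {R K M : Type*} [CommRing R] [Field K] [Algebra R K] [AddCommGroup M]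
    [Module K M] {k : ℕ} (B : LinearMap.BilinForm K M) (e : Module.Basis (Fin 2 ⊕ Fin k) K M)
    (hO : ∀ k l, k ≠ l → B (e k) (e l) = 0) (π u t r : R) (hu : u = t ^ 2 - π * r)
    (hπ : algebraMap R K π ≠ 0) (hprime : Prime π)
    (hinj : Function.Injective (algebraMap R K))
    (h0 : B (e (Sum.inl 0)) (e (Sum.inl 0)) = (algebraMap R K π)⁻¹)
    (h1 : B (e (Sum.inl 1)) (e (Sum.inl 1)) = (algebraMap R K π)⁻¹ * algebraMap R K (-u))
    (a : Fin k → R) (ha : ∀ i, B (e (Sum.inr i)) (e (Sum.inr i)) = algebraMap R K (a i))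
    (L : AddSubgroup M) (hcoord : ∀ x ∈ L, ∀ i, ∃ c, algebraMap R K c = e.repr x i)
    (hdual : ∀ x, x ∈ L ↔ ∀ y ∈ L, ∃ c, algebraMap R K c = B x y) :
    ∃ t', (t' = t ∨ t' = -t) ∧ ∀ x, x ∈ L ↔ ∃ ξ : Fin 2 ⊕ Fin k → R,
      (∀ i, algebraMap R K (ξ i) = e.repr x i) ∧
        π ∣ ξ (Sum.inl 0) - t' * ξ (Sum.inl 1) := by
  have step : ∀ x ∈ L, ∃ ξ : Fin 2 ⊕ Fin k → R,
      (∀ i, algebraMap R K (ξ i) = e.repr x i) ∧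
        (π ∣ ξ (Sum.inl 0) - t * ξ (Sum.inl 1) ∨ π ∣ ξ (Sum.inl 0) - (-t) * ξ (Sum.inl 1)) := by
    intro x hx
    choose ξ hξ using hcoord x hx
    refine ⟨ξ, hξ, ?_⟩
    obtain ⟨c, hc⟩ := (hdual x).1 hx x hx
    rw [bilin_diag B e hO x x, Fintype.sum_sum_type, Fin.sum_univ_two, h0, h1] at hc
    simp only [ha, ← hξ] at hc
    have key : π * c = ξ (Sum.inl 0) * ξ (Sum.inl 0) + (-u) * ξ (Sum.inl 1) * ξ (Sum.inl 1) +
        π * ∑ i, a i * ξ (Sum.inr i) * ξ (Sum.inr i) := by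
      apply hinj
      rw [map_mul, hc]
      simp only [map_add, map_mul, map_sum]
      field_simp
    have : π ∣ (ξ (Sum.inl 0) - t * ξ (Sum.inl 1)) * (ξ (Sum.inl 0) - (-t) * ξ (Sum.inl 1)) := by
      refine ⟨c - (∑ i, a i * ξ (Sum.inr i) * ξ (Sum.inr i)) - r * ξ (Sum.inl 1) * ξ (Sum.inl 1), ?_⟩
      rw [hu] at key
      linear_combination -key
    exact hprime.dvd_or_dvd this
  have main : ∃ t', (t' = t ∨ t' = -t) ∧ ∀ x ∈ L, ∃ ξ : Fin 2 ⊕ Fin k → R,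
      (∀ i, algebraMap R K (ξ i) = e.repr x i) ∧
        π ∣ ξ (Sum.inl 0) - t' * ξ (Sum.inl 1) := by
    by_contra hcon
    push Not at hcon
    obtain ⟨x, hx, hx'⟩ := hcon t (Or.inl rfl)
    obtain ⟨y, hy, hy'⟩ := hcon (-t) (Or.inr rfl)
    obtain ⟨ξ, hξ, h⟩ := step x hx
    obtain ⟨η, hη, h'⟩ := step y hy
    obtain ⟨ζ, hζ, h''⟩ := step (x + y) (L.add_mem hx hy)
    have hs : ∀ i, ζ i = ξ i + η i := by
      intro i; apply hinj; rw [map_add, hζ, hξ, hη]; simp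
    rw [hs, hs] at h''
    have n1 := hx' ξ hξ
    have n2 := hy' η hη
    have h := h.resolve_left n1
    have h' := h'.resolve_right n2
    rcases h'' with h'' | h''
    · apply n1
      have := dvd_sub h'' h'
      convert this using 1; ring
    · apply n2
      have := dvd_sub h'' h
      convert this using 1; ring
  obtain ⟨t', ht', hL⟩ := main
  refine ⟨t', ht', fun x => ⟨hL x, ?_⟩⟩
  rintro ⟨ξ, hξ, z, hz⟩
  rw [hdual]
  intro y hy
  obtain ⟨η, hη, z', hz'⟩ := hL y hy
  have hu' : u = t' ^ 2 - π * r := by rcases ht' with rfl | rfl <;> rw [hu] <;> ring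
  exact pairing_int B e hO π u t' r hu' hπ h0 h1 a ha x y ξ η hξ hη ⟨z, hz⟩ ⟨z', hz'⟩

theorem bc_polar {F K : Type*} {U : Type*} [Field F] [CharZero F] [Field K] [Algebra F K]
    [AddCommGroup U]
    [Module F U] [Invertible (2 : F)] (Q : QuadraticForm F U) (v w : U) :
    polarBilin (Q.baseChange K) (1 ⊗ₜ[F] v) (1 ⊗ₜ[F] w) = algebraMap F K (polarBilin Q v w) := by
  simp only [polarBilin_apply_apply, polar, ← TensorProduct.tmul_add,
    QuadraticForm.baseChange_tmul, map_sub]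
  simp [Algebra.smul_def]

theorem bc_coord {ι : Type*} (e : Module.Basis ι ℚ_[p] V) (Λ : Submodule ℤ_[p] V)
    (hΛ : ∀ x ∈ Λ, ∀ i, ∃ z : ℤ_[p], algebraMap ℤ_[p] ℚ_[p] z = e.repr x i)
    (hcomp : ∀ c : ℤ_[p],
      algebraMap ℚ_[p] (FractionRing (WittVector p 𝔽)) (algebraMap ℤ_[p] ℚ_[p] c) ∈
        (algebraMap (WittVector p 𝔽) (FractionRing (WittVector p 𝔽))).range)
    (x) (hx : x ∈ baseChangeLattice p 𝔽 Λ) (i : ι) :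
    ∃ c, algebraMap (WittVector p 𝔽) (FractionRing (WittVector p 𝔽)) c =
      (Algebra.TensorProduct.basis (FractionRing (WittVector p 𝔽)) e).repr x i := by
  unfold baseChangeLattice at hx
  induction hx using Submodule.span_induction with
  | mem x hx =>
    obtain ⟨v, hv, rfl⟩ := hx
    obtain ⟨z, hz⟩ := hΛ v hv i
    obtain ⟨c, hc⟩ := hcomp z
    refine ⟨c, ?_⟩
    rw [hc, hz]
    simp [Algebra.TensorProduct.basis_repr_tmul]
  | zero => exact ⟨0, by simp⟩
  | add x y _ _ hx hy =>
    obtain ⟨c, hc⟩ := hx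
    obtain ⟨d, hd⟩ := hy
    exact ⟨c + d, by simp [hc, hd]⟩
  | smul a x _ hx =>
    obtain ⟨c, hc⟩ := hx
    refine ⟨a * c, ?_⟩
    rw [← algebraMap_smul (FractionRing (WittVector p 𝔽)) a x]
    rw [map_smul, Finsupp.smul_apply, smul_eq_mul, map_mul, hc]

theorem gram_det {F U ι : Type*} [Field F] [AddCommGroup U] [Module F U] [Fintype ι]
    [DecidableEq ι] (B : LinearMap.BilinForm F U) (e e' : Module.Basis ι F U)
    (hO : ∀ k l, k ≠ l → B (e k) (e l) = 0) (hO' : ∀ k l, k ≠ l → B (e' k) (e' l) = 0) :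
    ∏ i, B (e' i) (e' i) = (e.det e') ^ 2 * ∏ i, B (e i) (e i) := by
  have h := LinearMap.BilinForm.toMatrix_mul_basis_toMatrix e e' B
  have d1 : LinearMap.BilinForm.toMatrix e B = Matrix.diagonal (fun i => B (e i) (e i)) := by
    ext i j
    rw [LinearMap.BilinForm.toMatrix_apply, Matrix.diagonal_apply]
    split_ifs with hij
    · rw [hij]
    · exact hO i j hij
  have d2 : LinearMap.BilinForm.toMatrix e' B = Matrix.diagonal (fun i => B (e' i) (e' i)) := by
    ext i j
    rw [LinearMap.BilinForm.toMatrix_apply, Matrix.diagonal_apply]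
    split_ifs with hij
    · rw [hij]
    · exact hO' i j hij
  have := congrArg Matrix.det h
  rw [d1, d2, Matrix.det_mul, Matrix.det_mul, Matrix.det_transpose, Matrix.det_diagonal,
    Matrix.det_diagonal] at this
  rw [Module.Basis.det_apply, ← this]
  ring

theorem wv_sqrt (a : WittVector p 𝔽) : ∃ t r : WittVector p 𝔽, a = t ^ 2 - (p : WittVector p 𝔽) * r := by
  obtain ⟨s, hs⟩ := IsAlgClosed.exists_pow_nat_eq (WittVector.constantCoeff a) (n := 2) (by norm_num)
  let t := WittVector.teichmuller p s
  have : t ^ 2 - a ∈ RingHom.ker (WittVector.constantCoeff : WittVector p 𝔽 →+* 𝔽) := by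
    rw [RingHom.mem_ker, map_sub, map_pow, ← hs]
    have : WittVector.constantCoeff t = s := WittVector.teichmuller_coeff_zero p s
    rw [this, sub_self]
  rw [WittVector.ker_constantCoeff, Ideal.mem_span_singleton] at this
  obtain ⟨r, hr⟩ := this
  exact ⟨t, r, by rw [← hr]; ring⟩

theorem wv_prime : Prime (p : WittVector p 𝔽) :=
  (WittVector.irreducible p).prime

theorem w_char (Q : QuadraticForm ℚ_[p] V)
    (hcomp : ∀ c : ℤ_[p],
      algebraMap ℚ_[p] (FractionRing (WittVector p 𝔽)) (algebraMap ℤ_[p] ℚ_[p] c) ∈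
        (algebraMap (WittVector p 𝔽) (FractionRing (WittVector p 𝔽))).range)
    {m : ℕ} (u : ℤ_[p]) (uW t r : WittVector p 𝔽)
    (huW : algebraMap (WittVector p 𝔽) (FractionRing (WittVector p 𝔽)) uW =
      algebraMap ℚ_[p] (FractionRing (WittVector p 𝔽)) (algebraMap ℤ_[p] ℚ_[p] u))
    (hu : uW = t ^ 2 - (p : WittVector p 𝔽) * r)
    (e : Module.Basis (Fin 2 ⊕ Fin (m + 1)) ℚ_[p] V) (Λ : Submodule ℤ_[p] V)
    (hΛ : ∀ x, x ∈ Λ ↔ ∀ i, ∃ z : ℤ_[p], algebraMap ℤ_[p] ℚ_[p] z = e.repr x i)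
    (hO : ∀ k l, k ≠ l → polarBilin Q (e k) (e l) = 0)
    (h0 : polarBilin Q (e (Sum.inl 0)) (e (Sum.inl 0)) = (algebraMap ℤ_[p] ℚ_[p] p)⁻¹)
    (h1 : polarBilin Q (e (Sum.inl 1)) (e (Sum.inl 1)) =
      (algebraMap ℤ_[p] ℚ_[p] p)⁻¹ * algebraMap ℤ_[p] ℚ_[p] (-u))
    (ha : ∀ i, ∃ a : ℤ_[p], polarBilin Q (e (Sum.inr i)) (e (Sum.inr i)) =
      algebraMap ℤ_[p] ℚ_[p] a)
    (L : Submodule (WittVector p 𝔽) (TensorProduct ℚ_[p] (FractionRing (WittVector p 𝔽)) V))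
    (hsd : wDual p 𝔽 (Q.baseChange (FractionRing (WittVector p 𝔽))) L = L)
    (hle : L ≤ baseChangeLattice p 𝔽 Λ) :
    ∃ t', (t' = t ∨ t' = -t) ∧ ∀ x, x ∈ L ↔ ∃ ξ : Fin 2 ⊕ Fin (m + 1) → WittVector p 𝔽,
      (∀ i, algebraMap (WittVector p 𝔽) (FractionRing (WittVector p 𝔽)) (ξ i) =
        (Algebra.TensorProduct.basis (FractionRing (WittVector p 𝔽)) e).repr x i) ∧
        (p : WittVector p 𝔽) ∣ ξ (Sum.inl 0) - t' * ξ (Sum.inl 1) := by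
  have hinj := IsFractionRing.injective (WittVector p 𝔽) (FractionRing (WittVector p 𝔽))
  have hpr := wv_prime p 𝔽
  have hπ : algebraMap (WittVector p 𝔽) (FractionRing (WittVector p 𝔽)) (p : WittVector p 𝔽) ≠ 0 := by
    rw [Ne, map_eq_zero_iff _ hinj]; exact hpr.ne_zero
  choose a ha using ha
  choose j hj using hcomp
  have hval : ∀ k l, polarBilin (Q.baseChange (FractionRing (WittVector p 𝔽)))
      (Algebra.TensorProduct.basis (FractionRing (WittVector p 𝔽)) e k)
      (Algebra.TensorProduct.basis (FractionRing (WittVector p 𝔽)) e l) =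
      algebraMap ℚ_[p] (FractionRing (WittVector p 𝔽)) (polarBilin Q (e k) (e l)) := by
    intro k l
    rw [Algebra.TensorProduct.basis_apply, Algebra.TensorProduct.basis_apply, bc_polar]
  refine lattice_char (polarBilin (Q.baseChange (FractionRing (WittVector p 𝔽))))
    (Algebra.TensorProduct.basis (FractionRing (WittVector p 𝔽)) e) ?_ (p : WittVector p 𝔽) uW t r hu
    hπ hpr hinj ?_ ?_ (fun i => j (a i)) ?_ L.toAddSubgroup ?_ ?_
  · intro k l hkl
    rw [hval, hO k l hkl, map_zero]
  · rw [hval, h0]; simp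
  · rw [hval, h1, map_neg, map_neg, map_mul, map_neg, huW]; simp
  · intro i
    rw [hval, ha, hj]
  · intro x hx i
    exact bc_coord p 𝔽 e Λ (fun x hx => (hΛ x).1 hx) (fun c => ⟨j c, hj c⟩) x (hle hx) i
  · intro x
    have : x ∈ L ↔ x ∈ wDual p 𝔽 (Q.baseChange (FractionRing (WittVector p 𝔽))) L := by rw [hsd]
    rw [Submodule.mem_toAddSubgroup, this]
    unfold wDual
    rw [LinearMap.BilinForm.mem_dualSubmodule]
    simp only [Submodule.mem_one, Submodule.mem_toAddSubgroup]

theorem w_map {m : ℕ}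
    (hcomp : ∀ c : ℤ_[p],
      algebraMap ℚ_[p] (FractionRing (WittVector p 𝔽)) (algebraMap ℤ_[p] ℚ_[p] c) ∈
        (algebraMap (WittVector p 𝔽) (FractionRing (WittVector p 𝔽))).range)
    (e e' : Module.Basis (Fin 2 ⊕ Fin (m + 1)) ℚ_[p] V) (f : V →ₗ[ℚ_[p]] V)
    (c : Fin 2 ⊕ Fin (m + 1) → ℤ_[p])
    (hf : ∀ v i, e'.repr (f v) i = algebraMap ℤ_[p] ℚ_[p] (c i) * e.repr v i)
    (t t' : WittVector p 𝔽) (hc0 : c (Sum.inl 0) = 1)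
    (hc1 : (c (Sum.inl 1) = 1 ∧ t = t') ∨ (c (Sum.inl 1) = -1 ∧ t = -t'))
    (L L' : Submodule (WittVector p 𝔽) (TensorProduct ℚ_[p] (FractionRing (WittVector p 𝔽)) V))
    (hL : ∀ x, x ∈ L ↔ ∃ ξ : Fin 2 ⊕ Fin (m + 1) → WittVector p 𝔽,
      (∀ i, algebraMap (WittVector p 𝔽) (FractionRing (WittVector p 𝔽)) (ξ i) =
        (Algebra.TensorProduct.basis (FractionRing (WittVector p 𝔽)) e).repr x i) ∧
        (p : WittVector p 𝔽) ∣ ξ (Sum.inl 0) - t * ξ (Sum.inl 1))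
    (hL' : ∀ x, x ∈ L' ↔ ∃ ξ : Fin 2 ⊕ Fin (m + 1) → WittVector p 𝔽,
      (∀ i, algebraMap (WittVector p 𝔽) (FractionRing (WittVector p 𝔽)) (ξ i) =
        (Algebra.TensorProduct.basis (FractionRing (WittVector p 𝔽)) e').repr x i) ∧
        (p : WittVector p 𝔽) ∣ ξ (Sum.inl 0) - t' * ξ (Sum.inl 1))
    (x) (hx : x ∈ L) :
    LinearMap.baseChange (FractionRing (WittVector p 𝔽)) f x ∈ L' := by
  have hinj := IsFractionRing.injective (WittVector p 𝔽) (FractionRing (WittVector p 𝔽))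
  choose j hj using hcomp
  have j1 : j 1 = 1 := by apply hinj; rw [hj]; simp
  have jm1 : j (-1) = -1 := by apply hinj; rw [hj]; simp
  have hrepr : ∀ y i, (Algebra.TensorProduct.basis (FractionRing (WittVector p 𝔽)) e').repr
      (LinearMap.baseChange (FractionRing (WittVector p 𝔽)) f y) i =
      algebraMap ℚ_[p] (FractionRing (WittVector p 𝔽)) (algebraMap ℤ_[p] ℚ_[p] (c i)) *
      (Algebra.TensorProduct.basis (FractionRing (WittVector p 𝔽)) e).repr y i := by
    intro y i
    induction y using TensorProduct.induction_on with
    | zero => simp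
    | add a b ha hb =>
      simp only [map_add, Finsupp.add_apply, ha, hb, mul_add]
    | tmul a v =>
      simp only [LinearMap.baseChange_tmul, Algebra.TensorProduct.basis_repr_tmul,
        Finsupp.smul_apply, Finsupp.mapRange_apply, hf, map_mul, smul_eq_mul]
      simp
      ring
  obtain ⟨ξ, hξ, hd⟩ := (hL x).1 hx
  rw [hL']
  refine ⟨fun i => j (c i) * ξ i, fun i => ?_, ?_⟩
  · rw [map_mul, hj, hξ, hrepr]
  · dsimp only
    rw [hc0, j1]
    rcases hc1 with ⟨h, rfl⟩ | ⟨h, rfl⟩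
    · rw [h, j1]; simpa using hd
    · rw [h, jm1]; convert hd using 1; ring

theorem delta_unit {m : ℕ} (B : LinearMap.BilinForm ℚ_[p] V)
    (e e' : Module.Basis (Fin 2 ⊕ Fin (m + 1)) ℚ_[p] V) (u a a' : ℤ_[p]) (hu : IsUnit u)
    (ha : IsUnit a) (ha' : IsUnit a')
    (hO : ∀ k l, k ≠ l → B (e k) (e l) = 0) (hO' : ∀ k l, k ≠ l → B (e' k) (e' l) = 0)
    (h0 : B (e (Sum.inl 0)) (e (Sum.inl 0)) = (algebraMap ℤ_[p] ℚ_[p] p)⁻¹)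
    (h1 : B (e (Sum.inl 1)) (e (Sum.inl 1)) =
      (algebraMap ℤ_[p] ℚ_[p] p)⁻¹ * algebraMap ℤ_[p] ℚ_[p] (-u))
    (h2 : B (e (Sum.inr 0)) (e (Sum.inr 0)) = algebraMap ℤ_[p] ℚ_[p] a)
    (h3 : ∀ i, i ≠ 0 → B (e (Sum.inr i)) (e (Sum.inr i)) = 1)
    (h0' : B (e' (Sum.inl 0)) (e' (Sum.inl 0)) = (algebraMap ℤ_[p] ℚ_[p] p)⁻¹)
    (h1' : B (e' (Sum.inl 1)) (e' (Sum.inl 1)) =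
      (algebraMap ℤ_[p] ℚ_[p] p)⁻¹ * algebraMap ℤ_[p] ℚ_[p] (-u))
    (h2' : B (e' (Sum.inr 0)) (e' (Sum.inr 0)) = algebraMap ℤ_[p] ℚ_[p] a')
    (h3' : ∀ i, i ≠ 0 → B (e' (Sum.inr i)) (e' (Sum.inr i)) = 1) :
    ∃ d : ℤ_[p]ˣ, algebraMap ℤ_[p] ℚ_[p] d = e.det e' ∧
      algebraMap ℤ_[p] ℚ_[p] a' = (e.det e') ^ 2 * algebraMap ℤ_[p] ℚ_[p] a := by
  have h := gram_det B e e' hO hO'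
  rw [Fintype.prod_sum_type, Fintype.prod_sum_type, Fin.prod_univ_two, Fin.prod_univ_two,
    Fin.prod_univ_succ, Fin.prod_univ_succ, h0, h1, h2, h0', h1', h2',
    Finset.prod_eq_one (fun i _ => h3 _ (Fin.succ_ne_zero i)),
    Finset.prod_eq_one (fun i _ => h3' _ (Fin.succ_ne_zero i))] at h
  have hinj := IsFractionRing.injective ℤ_[p] ℚ_[p]
  have hp0 : algebraMap ℤ_[p] ℚ_[p] p ≠ 0 := by
    simp [(Fact.out : p.Prime).ne_zero]
  have hu0 : algebraMap ℤ_[p] ℚ_[p] (-u) ≠ 0 := by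
    rw [Ne, map_eq_zero_iff _ hinj, neg_eq_zero]; exact hu.ne_zero
  have key : algebraMap ℤ_[p] ℚ_[p] a' = (e.det e') ^ 2 * algebraMap ℤ_[p] ℚ_[p] a := by
    have hP : (algebraMap ℤ_[p] ℚ_[p] p)⁻¹ * ((algebraMap ℤ_[p] ℚ_[p] p)⁻¹ *
      algebraMap ℤ_[p] ℚ_[p] (-u)) ≠ 0 :=
      mul_ne_zero (inv_ne_zero hp0) (mul_ne_zero (inv_ne_zero hp0) hu0)
    apply mul_left_cancel₀ hP
    linear_combination h
  have hn : ‖e.det e'‖ = 1 := by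
    have := congrArg norm key
    rw [norm_mul, norm_pow, PadicInt.algebraMap_apply, PadicInt.algebraMap_apply,
      ← PadicInt.norm_def, ← PadicInt.norm_def, PadicInt.isUnit_iff.1 ha,
      PadicInt.isUnit_iff.1 ha', mul_one] at this
    exact (pow_eq_one_iff_of_nonneg (norm_nonneg _) two_ne_zero).1 this.symm
  obtain ⟨d, hd⟩ : ∃ d : ℤ_[p], (d : ℚ_[p]) = e.det e' := ⟨⟨e.det e', hn.le⟩, rfl⟩
  have hun : IsUnit d := by
    rw [PadicInt.isUnit_iff, PadicInt.norm_def, hd, hn]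
  obtain ⟨w, rfl⟩ := hun
  exact ⟨w, hd, key⟩

theorem exists_g {F U ι : Type*} [Field F] [AddCommGroup U] [Module F U] [Fintype ι]
    [DecidableEq ι] (e e' : Module.Basis ι F U) (c : ι → F) (hc : ∀ i, c i ≠ 0) :
    ∃ g : U ≃ₗ[F] U, (∀ v i, e'.repr (g v) i = c i * e.repr v i) ∧
      LinearMap.det (g : U →ₗ[F] U) = (∏ i, c i) * e.det e' := by
  let g := e.equivFun ≪≫ₗ (LinearEquiv.piCongrRight
    (fun i => LinearEquiv.smulOfNeZero F F (c i) (hc i))) ≪≫ₗ e'.equivFun.symm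
  have hg : ∀ v i, e'.repr (g v) i = c i * e.repr v i := by
    intro v i
    have : e'.equivFun (g v) i = c i * e.repr v i := by
      simp only [g, LinearEquiv.trans_apply, LinearEquiv.apply_symm_apply]
      simp
    exact this
  refine ⟨g, hg, ?_⟩
  have h1 : (⇑(g : U →ₗ[F] U) ∘ e) = fun i => c i • e' i := by
    funext i
    apply e'.repr.injective
    ext k
    simp only [Function.comp_apply, LinearEquiv.coe_coe, hg]
    by_cases h : i = k
    · subst h; simp
    · simp [h]
  have h2 := e.det_comp (g : U →ₗ[F] U) e
  rw [h1, Module.Basis.det_self, mul_one] at h2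
  rw [← h2]
  exact MultilinearMap.map_smul_univ e.det.toMultilinearMap c e'
theorem statement_10 (hp : p ≠ 2)
    (Q : QuadraticForm ℚ_[p] V)
    (hQ : LinearMap.BilinForm.Nondegenerate (QuadraticMap.polarBilin Q))
    (hn : 3 ≤ Module.finrank ℚ_[p] V)
    (hnosd : ¬ ∃ L : Submodule ℤ_[p] V, IsZpLattice p L ∧ zpDual p Q L = L)
    -- the embedding `ℚ_p → K₀` restricts to `ℤ_p → W₀`
    (hcomp : ∀ c : ℤ_[p],
      algebraMap ℚ_[p] (FractionRing (WittVector p 𝔽)) (algebraMap ℤ_[p] ℚ_[p] c) ∈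
        (algebraMap (WittVector p 𝔽) (FractionRing (WittVector p 𝔽))).range)
    (Λ₁ Λ₂ : Submodule ℤ_[p] V)
    (hΛ₁ : IsTypeTwoVertexLattice p Q Λ₁) (hΛ₂ : IsTypeTwoVertexLattice p Q Λ₂)
    (L₁ L₂ : Submodule (WittVector p 𝔽) (TensorProduct ℚ_[p] (FractionRing (WittVector p 𝔽)) V))
    (hL₁ : IsWLattice p 𝔽 L₁) (hL₂ : IsWLattice p 𝔽 L₂)
    (hsd₁ : wDual p 𝔽 (Q.baseChange (FractionRing (WittVector p 𝔽))) L₁ = L₁)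
    (hsd₂ : wDual p 𝔽 (Q.baseChange (FractionRing (WittVector p 𝔽))) L₂ = L₂)
    (hbetween₁ : baseChangeLattice p 𝔽 (zpDual p Q Λ₁) ≤ L₁ ∧ L₁ ≤ baseChangeLattice p 𝔽 Λ₁)
    (hbetween₂ : baseChangeLattice p 𝔽 (zpDual p Q Λ₂) ≤ L₂ ∧ L₂ ≤ baseChangeLattice p 𝔽 Λ₂) :
    ∃ g : V ≃ₗ[ℚ_[p]] V, (∀ x, Q (g x) = Q x) ∧
      LinearMap.det (g : V →ₗ[ℚ_[p]] V) = 1 ∧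
      ⇑g '' (Λ₁ : Set V) = (Λ₂ : Set V) ∧
      ⇑(LinearMap.baseChange (FractionRing (WittVector p 𝔽)) (g : V →ₗ[ℚ_[p]] V)) ''
          (L₁ : Set (TensorProduct ℚ_[p] (FractionRing (WittVector p 𝔽)) V)) =
        (L₂ : Set (TensorProduct ℚ_[p] (FractionRing (WittVector p 𝔽)) V)) := by
  have hinj := IsFractionRing.injective ℤ_[p] ℚ_[p]
  obtain ⟨m, hm⟩ : ∃ m, Module.finrank ℚ_[p] V = m + 3 := ⟨_, (Nat.sub_add_cancel hn).symm⟩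
  obtain ⟨u, huu, hu⟩ := zp_nonsq p hp
  obtain ⟨e, hΛ, hO, h0, h1, ⟨a, hau, h2⟩, h3⟩ := normal_form p hp Q hQ hnosd m hm u hu Λ₁ hΛ₁
  obtain ⟨e', hΛ', hO', h0', h1', ⟨a', hau', h2'⟩, h3'⟩ := normal_form p hp Q hQ hnosd m hm u hu Λ₂ hΛ₂
  obtain ⟨uW, huW⟩ := hcomp u
  obtain ⟨t, r, htr⟩ := wv_sqrt p 𝔽 uW
  have hall : ∀ i, ∃ b : ℤ_[p], polarBilin Q (e (Sum.inr i)) (e (Sum.inr i)) =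
      algebraMap ℤ_[p] ℚ_[p] b := by
    intro i
    by_cases hi : i = 0
    · subst hi; exact ⟨a, h2⟩
    · exact ⟨1, by rw [h3 i hi, map_one]⟩
  have hall' : ∀ i, ∃ b : ℤ_[p], polarBilin Q (e' (Sum.inr i)) (e' (Sum.inr i)) =
      algebraMap ℤ_[p] ℚ_[p] b := by
    intro i
    by_cases hi : i = 0
    · subst hi; exact ⟨a', h2'⟩
    · exact ⟨1, by rw [h3' i hi, map_one]⟩
  obtain ⟨t₁, ht₁, hc₁⟩ := w_char p 𝔽 Q hcomp u uW t r huW htr e Λ₁ hΛ hO h0 h1 hall L₁ hsd₁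
    hbetween₁.2
  obtain ⟨t₂, ht₂, hc₂⟩ := w_char p 𝔽 Q hcomp u uW t r huW htr e' Λ₂ hΛ' hO' h0' h1' hall' L₂ hsd₂
    hbetween₂.2
  obtain ⟨d, hd, hda⟩ := delta_unit p (polarBilin Q) e e' u a a' huu hau hau' hO hO' h0 h1 h2 h3
    h0' h1' h2' h3'
  obtain ⟨ε, hε⟩ : ∃ ε : ℤ_[p]ˣ, (ε = 1 ∧ t₁ = t₂) ∨ (ε = -1 ∧ t₁ = -t₂) := by
    rcases ht₁ with rfl | rfl <;> rcases ht₂ with rfl | rfl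
    · exact ⟨1, Or.inl ⟨rfl, rfl⟩⟩
    · exact ⟨-1, Or.inr ⟨rfl, by simp⟩⟩
    · exact ⟨-1, Or.inr ⟨rfl, rfl⟩⟩
    · exact ⟨1, Or.inl ⟨rfl, rfl⟩⟩
  have hεε : ε * ε = 1 := by rcases hε with ⟨rfl, _⟩ | ⟨rfl, _⟩ <;> simp
  let c : Fin 2 ⊕ Fin (m + 1) → ℤ_[p]ˣ :=
    Sum.elim ![1, ε] (fun i => if i = 0 then (ε * d)⁻¹ else 1)
  have c0 : c (Sum.inl 0) = 1 := rfl
  have c1 : c (Sum.inl 1) = ε := rfl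
  have c2 : c (Sum.inr 0) = (ε * d)⁻¹ := by simp [c]
  have c3 : ∀ i, i ≠ 0 → c (Sum.inr i) = 1 := by intro i hi; simp [c, hi]
  have hprod : ∏ i, c i = d⁻¹ := by
    rw [Fintype.prod_sum_type, Fin.prod_univ_two, Fin.prod_univ_succ, c0, c1, c2,
      Finset.prod_eq_one (fun i _ => c3 _ (Fin.succ_ne_zero i))]
    simp [mul_inv]
  clear_value c
  obtain ⟨g, hg, hdet⟩ := exists_g e e' (fun i => algebraMap ℤ_[p] ℚ_[p] (c i)) (by
    intro i
    rw [Ne, map_eq_zero_iff _ hinj]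
    exact (c i).ne_zero)
  have hg' : ∀ v i, e.repr (g.symm v) i =
      algebraMap ℤ_[p] ℚ_[p] ((c i)⁻¹ : ℤ_[p]ˣ) * e'.repr v i := by
    intro v i
    have := hg (g.symm v) i
    rw [LinearEquiv.apply_symm_apply] at this
    rw [this, ← mul_assoc, ← map_mul, Units.inv_mul, map_one, one_mul]
  refine ⟨g, ?_, ?_, ?_, ?_⟩
  · have hw : ∀ i, polarBilin Q (e' i) (e' i) * (algebraMap ℤ_[p] ℚ_[p] (c i)) ^ 2 =
        polarBilin Q (e i) (e i) := by
      have hε2 : (algebraMap ℤ_[p] ℚ_[p] ε) ^ 2 = 1 := by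
        rw [← map_pow, pow_two, ← Units.val_mul, hεε]; simp
      rintro (i | i)
      · fin_cases i
        · change polarBilin Q (e' (Sum.inl 0)) (e' (Sum.inl 0)) *
            (algebraMap ℤ_[p] ℚ_[p] (c (Sum.inl 0))) ^ 2 =
            polarBilin Q (e (Sum.inl 0)) (e (Sum.inl 0))
          rw [c0, h0, h0']; simp
        · change polarBilin Q (e' (Sum.inl 1)) (e' (Sum.inl 1)) *
            (algebraMap ℤ_[p] ℚ_[p] (c (Sum.inl 1))) ^ 2 =
            polarBilin Q (e (Sum.inl 1)) (e (Sum.inl 1))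
          rw [c1, h1, h1', hε2, mul_one]
      · by_cases hi : i = 0
        · subst hi
          rw [c2, h2, h2', hda, ← hd, ← map_pow, ← map_pow, ← map_mul, ← map_mul]
          congr 1
          have e1 : (d : ℤ_[p]) ^ 2 * (((ε * d)⁻¹ : ℤ_[p]ˣ) : ℤ_[p]) ^ 2 = 1 := by
            rw [← Units.val_pow_eq_pow_val, ← Units.val_pow_eq_pow_val, ← Units.val_mul]
            rw [inv_pow, mul_pow, pow_two ε, hεε, one_mul, mul_inv_cancel, Units.val_one]
          linear_combination a * e1
        · rw [c3 i hi, h3 i hi, h3' i hi]; simp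
    intro x
    have hB : polarBilin Q (g x) (g x) = polarBilin Q x x := by
      rw [bilin_diag _ e' hO', bilin_diag _ e hO]
      apply Finset.sum_congr rfl
      intro i _
      rw [hg, ← hw i]; ring
    simp only [polarBilin_apply_apply, polar_self] at hB
    simpa using hB
  · rw [hdet, ← map_prod, ← hd, ← map_mul]
    have : (∏ i, (c i : ℤ_[p])) = ((d⁻¹ : ℤ_[p]ˣ) : ℤ_[p]) := by
      rw [← hprod, Units.coe_prod]
    rw [this, Units.inv_mul, map_one]
  · apply Set.Subset.antisymm
    · rintro _ ⟨x, hx, rfl⟩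
      have hx := (hΛ x).1 hx
      refine (hΛ' _).2 fun i => ?_
      obtain ⟨z, hz⟩ := hx i
      exact ⟨c i * z, by rw [hg, map_mul, hz]⟩
    · intro y hy
      refine ⟨g.symm y, (hΛ _).2 fun i => ?_, g.apply_symm_apply y⟩
      obtain ⟨z, hz⟩ := (hΛ' y).1 hy i
      exact ⟨((c i)⁻¹ : ℤ_[p]ˣ) * z, by rw [hg', map_mul, hz]⟩
  · apply Set.Subset.antisymm
    · rintro _ ⟨x, hx, rfl⟩
      refine w_map p 𝔽 hcomp e e' (g : V →ₗ[ℚ_[p]] V) (fun i => (c i : ℤ_[p])) hg t₁ t₂ ?_ ?_ L₁ L₂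
        hc₁ hc₂ x hx
      · simp [c0]
      · rcases hε with ⟨h, h'⟩ | ⟨h, h'⟩
        · left; exact ⟨by simp [c1, h], h'⟩
        · right; exact ⟨by simp [c1, h], h'⟩
    · intro y hy
      refine ⟨LinearMap.baseChange _ (g.symm : V →ₗ[ℚ_[p]] V) y, ?_, ?_⟩
      · refine w_map p 𝔽 hcomp e' e (g.symm : V →ₗ[ℚ_[p]] V)
          (fun i => (((c i)⁻¹ : ℤ_[p]ˣ) : ℤ_[p])) hg' t₂ t₁ ?_ ?_ L₂ L₁ hc₂ hc₁ y hy
        · simp [c0]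
        · rcases hε with ⟨h, h'⟩ | ⟨h, h'⟩
          · left; exact ⟨by simp [c1, h], h'.symm⟩
          · right; exact ⟨by simp [c1, h], by rw [h']; simp⟩
      · rw [← LinearMap.comp_apply, ← LinearMap.baseChange_comp]
        simp

end BaseChange
end

section
/- In the semilinear setting below, let L be a special lattice in V. Then p·Φ_*(L) ⊆ L ∩ Φ_*(L); the lattice Φ_*(L) is self-dual with Q(Φ_*(L)) ⊆ W₀, so Q induces an 𝔽-quadratic form q̄ on the 𝔽-vector space Φ_*(L)/pΦ_*(L); the image H of L ∩ Φ_*(L) in Φ_*(L)/pΦ_*(L) is a hyperplane (a subspace of codimension 1); and the orthogonal complement H^⊥ of H with respect to the bilinear form of q̄ is a 1-dimensional subspace on which q̄ vanishes identically (an isotropic line). -/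
/-!
Statement 11: In the semilinear setting (`W₀ = W(𝔽)`, `K₀ = Frac W₀`, `σ` the automorphism of
`K₀` induced by the Witt vector Frobenius, `Φ : V → V` a `σ`-semilinear bijection with
`Q (Φ v) = σ (Q v)`), let `L` be a special lattice.  Then `p Φ_* L ⊆ L ∩ Φ_* L`; the lattice
`Φ_* L` is self-dual with `Q (Φ_* L) ⊆ W₀`, so `Q` induces an `𝔽`-quadratic form `q̄` on
`Φ_* L / p Φ_* L`; the image `H` of `L ∩ Φ_* L` in `Φ_* L / p Φ_* L` is a hyperplane; and the
orthogonal complement `H^⊥` of `H` is a 1-dimensional subspace on which `q̄` vanishes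
identically (an isotropic line).
-/

open QuadraticMap

theorem core_aux {R K V : Type*} [CommRing R] [IsDomain R] [Field K] [Algebra R K]
    [IsFractionRing R K] [AddCommGroup V] [Module K V] [Module R V] [IsScalarTower R K V]
    (π : R) (hπ0 : π ≠ 0) (hdiv : ∀ r : R, π ∣ r ∨ IsUnit r) (hone : ∀ c : R, IsUnit (1 - c * π))
    (h2 : IsUnit (2 : R))
    (Q : QuadraticForm K V) (L N : Submodule R V)
    (hLd : ∀ x, x ∈ L ↔ ∀ y ∈ L, ∃ r : R, algebraMap R K r = QuadraticMap.polar Q x y)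
    (hNd : ∀ x, x ∈ N ↔ ∀ y ∈ N, ∃ r : R, algebraMap R K r = QuadraticMap.polar Q x y)
    (hcov : L ⋖ L ⊔ N) :
    (∀ x ∈ N, π • x ∈ L ⊓ N) ∧
    (∀ x ∈ N, ∃ r : R, algebraMap R K r = Q x) ∧
    (∀ x ∈ N, ∀ y ∈ N, (∃ w ∈ N, π • w = x - y) →
      ∃ c : R, Q x - Q y = algebraMap R K π * algebraMap R K c) ∧
    L ⊓ N ⋖ N ∧
    (∃ x₀ ∈ N, (∀ y ∈ L ⊓ N, ∃ c : R, QuadraticMap.polar Q x₀ y =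
        algebraMap R K π * algebraMap R K c) ∧ (¬ ∃ w ∈ N, π • w = x₀) ∧
      ∀ x ∈ N, (∀ y ∈ L ⊓ N, ∃ c : R, QuadraticMap.polar Q x y =
        algebraMap R K π * algebraMap R K c) →
        ((∃ c : R, ∃ w ∈ N, π • w = x - c • x₀) ∧
          ∃ c : R, Q x = algebraMap R K π * algebraMap R K c)) := by
  have hsm : ∀ (r : R) (v : V), r • v = algebraMap R K r • v := fun r v =>
    (algebraMap_smul K r v).symm
  have hπK : algebraMap R K π ≠ 0 := by
    simpa using hπ0
  have hinj : Function.Injective (algebraMap R K) := IsFractionRing.injective R K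
  have hpl : ∀ (r : R) (x y : V), polar Q (r • x) y = algebraMap R K r * polar Q x y := by
    intro r x y; rw [hsm, polar_smul_left, smul_eq_mul]
  have hpr : ∀ (r : R) (x y : V), polar Q x (r • y) = algebraMap R K r * polar Q x y := by
    intro r x y; rw [hsm, polar_smul_right, smul_eq_mul]
  have hQs : ∀ (r : R) (x : V), Q (r • x) = algebraMap R K r * algebraMap R K r * Q x := by
    intro r x; rw [hsm, QuadraticMap.map_smul, smul_eq_mul]
  -- Q integral on self-dual
  have hQint : ∀ M : Submodule R V,
      (∀ x, x ∈ M ↔ ∀ y ∈ M, ∃ r : R, algebraMap R K r = QuadraticMap.polar Q x y) →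
      ∀ x ∈ M, ∃ r : R, algebraMap R K r = Q x := by
    intro M hM x hx
    obtain ⟨r, hr⟩ := (hM x).1 hx x hx
    obtain ⟨u, hu⟩ := h2
    have h2K : (2 : K) = algebraMap R K u := by rw [hu, map_ofNat]
    have h2i : algebraMap R K ((u⁻¹ : Rˣ) : R) * algebraMap R K u = 1 := by
      rw [← map_mul]; simp
    refine ⟨((u⁻¹ : Rˣ) : R) * r, ?_⟩
    rw [map_mul, hr, polar_self, nsmul_eq_mul, Nat.cast_ofNat, h2K, ← mul_assoc, h2i, one_mul]
  have hpN : ∀ x ∈ N, π • x ∈ L := by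
    intro x hx
    by_contra hπx
    have hxL : x ∉ L := fun h => hπx (L.smul_mem _ h)
    have hle : L ⊔ Submodule.span R {π • x} ≤ L ⊔ N := by
      refine sup_le_sup_left ?_ _
      rw [Submodule.span_singleton_le_iff_mem]
      exact N.smul_mem _ hx
    have hlt : L < L ⊔ Submodule.span R {π • x} := by
      refine lt_of_le_of_ne le_sup_left fun h => hπx ?_
      rw [h]
      exact (le_sup_right : _ ≤ L ⊔ _) (Submodule.mem_span_singleton_self _)
    have heq : L ⊔ Submodule.span R {π • x} = L ⊔ N :=
      hle.eq_of_not_lt fun h => hcov.2 hlt h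
    have hx' : x ∈ L ⊔ Submodule.span R {π • x} := by
      rw [heq]; exact (le_sup_right : _ ≤ L ⊔ _) hx
    obtain ⟨l, hl, t, ht, hlt⟩ := Submodule.mem_sup.1 hx'
    obtain ⟨c, rfl⟩ := Submodule.mem_span_singleton.1 ht
    obtain ⟨u, hu⟩ := hone c
    have : (1 - c * π) • x ∈ L := by
      have : (1 - c * π) • x = l := by
        rw [sub_smul, one_smul, mul_smul, sub_eq_iff_eq_add, hlt]
      rwa [this]
    rw [← hu] at this
    apply hxL
    have h3 := L.smul_mem ((u⁻¹ : Rˣ) : R) this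
    rwa [← mul_smul, Units.inv_mul, one_smul] at h3
  have hpL : ∀ z ∈ L, π • z ∈ N := by
    intro z hz
    rw [hNd]
    intro y hy
    rw [hpl, ← hpr]
    exact (hLd z).1 hz _ (hpN y hy)
  have hwd : ∀ x ∈ N, ∀ y ∈ N, (∃ w ∈ N, π • w = x - y) →
      ∃ c : R, Q x - Q y = algebraMap R K π * algebraMap R K c := by
    rintro x hx y hy ⟨w, hw, h⟩
    obtain ⟨a, ha⟩ := hQint N hNd w hw
    obtain ⟨b, hb⟩ := (hNd y).1 hy w hw
    refine ⟨π * a + b, ?_⟩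
    have : x = y + π • w := by rw [h]; abel
    rw [this, QuadraticMap.map_add Q, hQs, hpr, ← ha, ← hb]
    simp only [map_add, map_mul]; ring
  have hcov2 : L ⊓ N ⋖ N := IsLowerModularLattice.inf_covBy_of_covBy_sup hcov
  refine ⟨fun x hx => ⟨hpN x hx, N.smul_mem _ hx⟩, hQint N hNd, hwd, hcov2, ?_⟩
  obtain ⟨e, heN, heL⟩ : ∃ e ∈ N, e ∉ L := by
    by_contra! h
    exact hcov.1.ne (sup_eq_left.2 h).symm
  obtain ⟨z, hzL, hzN⟩ : ∃ z ∈ L, z ∉ N := by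
    by_contra! h
    exact heL ((hLd e).2 fun y hy => (hNd e).1 heN y (h y hy))
  have hNe : ∀ y ∈ N, ∃ l ∈ L ⊓ N, ∃ c : R, y = l + c • e := by
    intro y hy
    have heq : (L ⊓ N) ⊔ Submodule.span R {e} = N := by
      have hle : (L ⊓ N) ⊔ Submodule.span R {e} ≤ N :=
        sup_le inf_le_right (by rwa [Submodule.span_singleton_le_iff_mem])
      refine hle.eq_of_not_lt fun h => hcov2.2 (lt_of_le_of_ne le_sup_left fun h' => heL ?_) h
      have : e ∈ L ⊓ N := by
        rw [h']; exact (le_sup_right : _ ≤ (L ⊓ N) ⊔ _) (Submodule.mem_span_singleton_self _)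
      exact this.1
    rw [← heq] at hy
    obtain ⟨l, hl, t, ht, rfl⟩ := Submodule.mem_sup.1 hy
    obtain ⟨c, rfl⟩ := Submodule.mem_span_singleton.1 ht
    exact ⟨l, hl, c, rfl⟩
  -- integrality test
  have htest : ∀ v : V, (∀ y ∈ L ⊓ N, ∃ r : R, algebraMap R K r = polar Q v y) →
      (∃ r : R, algebraMap R K r = polar Q v e) → v ∈ N := by
    rintro v h1 ⟨r, hr⟩
    rw [hNd]
    intro y hy
    obtain ⟨l, hl, c, rfl⟩ := hNe y hy
    obtain ⟨s, hs⟩ := h1 l hl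
    refine ⟨s + c * r, ?_⟩
    rw [polar_add_right, hpr, ← hr, ← hs, map_add, map_mul]
  obtain ⟨q, hq⟩ := hQint L hLd z hzL
  refine ⟨π • z, hpL z hzL, ?_, ?_, ?_⟩
  · intro y hy
    obtain ⟨r, hr⟩ := (hLd z).1 hzL y hy.1
    exact ⟨r, by rw [hpl, hr]⟩
  · rintro ⟨w, hw, h⟩
    rw [hsm, hsm π z] at h
    have := smul_right_injective V hπK h
    exact hzN (this ▸ hw)
  · intro x hx hxH
    obtain ⟨u, hu⟩ := (hNd _).1 (hpL z hzL) e heN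
    obtain ⟨b, hb⟩ := (hNd x).1 hx e heN
    have huu : IsUnit u := by
      refine (hdiv u).resolve_left ?_
      rintro ⟨d, rfl⟩
      apply hzN
      apply htest z
      · intro y hy
        exact (hLd z).1 hzL y hy.1
      · refine ⟨d, mul_left_cancel₀ hπK ?_⟩
        rw [← map_mul, hu, hpl]
    obtain ⟨u, rfl⟩ := huu
    set c : R := b * ((u⁻¹ : Rˣ) : R) with hc
    have hcu : c * u = b := by rw [hc, mul_assoc, Units.inv_mul, mul_one]
    have hex : ∃ w ∈ N, π • w = x - c • π • z := by
      have hw : π • ((algebraMap R K π)⁻¹ • (x - c • π • z)) = x - c • π • z := by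
        rw [hsm, smul_inv_smul₀ hπK]
      have hpol : ∀ y, polar Q ((algebraMap R K π)⁻¹ • (x - c • π • z)) y =
          (algebraMap R K π)⁻¹ * (polar Q x y - algebraMap R K c *
            (algebraMap R K π * polar Q z y)) := by
        intro y
        rw [polar_smul_left, polar_sub_left, hpl, hpl, smul_eq_mul]
      refine ⟨_, htest _ ?_ ?_, hw⟩
      · intro y hy
        obtain ⟨s, hs⟩ := hxH y hy
        obtain ⟨r, hr⟩ := (hLd z).1 hzL y hy.1
        refine ⟨s - c * r, ?_⟩
        rw [hpol, hs, ← hr, map_sub, map_mul]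
        field_simp
      · refine ⟨0, ?_⟩
        rw [hpol, ← hpl, ← hu, ← hb, ← map_mul, hcu]
        simp
    refine ⟨⟨c, hex⟩, ?_⟩
    obtain ⟨d, hd⟩ := hwd x hx _ (N.smul_mem c (hpL z hzL)) hex
    refine ⟨d + c * c * π * q, ?_⟩
    rw [sub_eq_iff_eq_add.1 hd, hQs, hQs, ← hq]
    simp only [map_add, map_mul]
    ring


variable (p : ℕ) [Fact p.Prime] (𝔽 : Type*) [Field 𝔽] [CharP 𝔽 p] [IsAlgClosed 𝔽]
variable {V : Type*} [AddCommGroup V]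
  [Module (FractionRing (WittVector p 𝔽)) V]
  [Module (WittVector p 𝔽) V]
  [IsScalarTower (WittVector p 𝔽) (FractionRing (WittVector p 𝔽)) V]

/-- `L` is a special lattice: a self-dual lattice such that `(L + Φ_* L)/L` has length 1. -/
noncomputable def IsSpecialLattice (Q : QuadraticForm (FractionRing (WittVector p 𝔽)) V)
    (Φ : V ≃+ V) (L : Submodule (WittVector p 𝔽) V) : Prop :=
  IsLattice p 𝔽 L ∧ dualLattice p 𝔽 Q L = L ∧ L ⋖ (L ⊔ phiStar p 𝔽 Φ L)

/-- `z` lies in `p W₀ ⊆ K₀`, i.e. `z ≡ 0 (mod p)`. -/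
def MemPW (z : FractionRing (WittVector p 𝔽)) : Prop :=
  ∃ c : WittVector p 𝔽,
    z = (p : FractionRing (WittVector p 𝔽)) * algebraMap (WittVector p 𝔽) _ c

theorem statement_11 (hp : p ≠ 2) [FiniteDimensional (FractionRing (WittVector p 𝔽)) V]
    (Q : QuadraticForm (FractionRing (WittVector p 𝔽)) V)
    (hQ : LinearMap.SeparatingLeft (QuadraticMap.polarBilin Q))
    (Φ : V ≃+ V)
    (hΦsemi : ∀ (a : FractionRing (WittVector p 𝔽)) (v : V),
      Φ (a • v) = WittVector.FractionRing.frobenius p 𝔽 a • Φ v)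
    (hΦQ : ∀ v : V, Q (Φ v) = WittVector.FractionRing.frobenius p 𝔽 (Q v))
    (L : Submodule (WittVector p 𝔽) V) (hL : IsSpecialLattice p 𝔽 Q Φ L)
    -- abbreviations: `N = Φ_* L`, `pN = p ⬝ N`, and `H'` the preimage in `N` of the image `H`
    -- of `L ∩ Φ_* L` in `N/pN`
    (N : Submodule (WittVector p 𝔽) V) (hN : N = phiStar p 𝔽 Φ L)
    (pN : Submodule (WittVector p 𝔽) V)
    (hpN : pN = N.map ((p : WittVector p 𝔽) • (LinearMap.id : V →ₗ[WittVector p 𝔽] V)))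
    (H' : Submodule (WittVector p 𝔽) V) (hH' : H' = (L ⊓ N) ⊔ pN) :
    -- `p Φ_* L ⊆ L ∩ Φ_* L`
    (∀ x ∈ N, (p : WittVector p 𝔽) • x ∈ L ⊓ N) ∧
    -- `Φ_* L` is self-dual and `Q` is `W₀`-valued on it ...
    dualLattice p 𝔽 Q N = N ∧
    (∀ x ∈ N, Q x ∈ (1 : Submodule (WittVector p 𝔽) (FractionRing (WittVector p 𝔽)))) ∧
    (∀ x ∈ N, ∀ y ∈ N, x - y ∈ pN → MemPW p 𝔽 (Q x - Q y)) ∧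
    -- the image `H` of `L ∩ Φ_* L` in `N/pN` is a hyperplane (codimension 1) ...
    H' ⋖ N ∧
    -- ... and `H^⊥` is a 1-dimensional subspace of `N/pN` on which `q̄` vanishes identically
    (∃ x₀ ∈ N, (∀ y ∈ H', MemPW p 𝔽 (QuadraticMap.polar Q x₀ y)) ∧ x₀ ∉ pN ∧
      ∀ x ∈ N, (∀ y ∈ H', MemPW p 𝔽 (QuadraticMap.polar Q x y)) →
        ((∃ c : WittVector p 𝔽, x - c • x₀ ∈ pN) ∧ MemPW p 𝔽 (Q x))) := by
  have hfr : ∀ a : WittVector p 𝔽, WittVector.FractionRing.frobenius p 𝔽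
      (algebraMap _ (FractionRing (WittVector p 𝔽)) a) =
      algebraMap _ (FractionRing (WittVector p 𝔽)) (WittVector.frobeniusEquiv p 𝔽 a) := by
    intro a
    exact IsFractionRing.ringEquivOfRingEquiv_algebraMap _ a
  have hint : ∀ z : FractionRing (WittVector p 𝔽),
      (∃ r : WittVector p 𝔽, algebraMap _ _ r = WittVector.FractionRing.frobenius p 𝔽 z) ↔
      ∃ r : WittVector p 𝔽, algebraMap _ _ r = z := by
    intro z
    constructor
    · rintro ⟨r, hr⟩
      refine ⟨(WittVector.frobeniusEquiv p 𝔽).symm r,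
        (WittVector.FractionRing.frobenius p 𝔽).injective ?_⟩
      rw [hfr, RingEquiv.apply_symm_apply, hr]
    · rintro ⟨r, rfl⟩
      exact ⟨_, (hfr r).symm⟩
  have hpolΦ : ∀ x y, polar Q (Φ x) (Φ y) =
      WittVector.FractionRing.frobenius p 𝔽 (polar Q x y) := by
    intro x y
    simp only [polar, ← map_add, hΦQ, map_sub]
  have hNmem : ∀ x, Φ x ∈ N ↔ x ∈ L := by
    have key : ∀ v ∈ N, ∃ x ∈ L, Φ x = v := by
      intro v hv
      rw [hN] at hv
      refine Submodule.span_induction (p := fun v _ => ∃ x ∈ L, Φ x = v) ?_ ?_ ?_ ?_ hv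
      · rintro _ ⟨x, hx, rfl⟩
        exact ⟨x, hx, rfl⟩
      · exact ⟨0, L.zero_mem, map_zero _⟩
      · rintro _ _ _ _ ⟨x, hx, rfl⟩ ⟨y, hy, rfl⟩
        exact ⟨x + y, L.add_mem hx hy, map_add _ _ _⟩
      · rintro a _ _ ⟨x, hx, rfl⟩
        refine ⟨(WittVector.frobeniusEquiv p 𝔽).symm a • x, L.smul_mem _ hx, ?_⟩
        rw [← algebraMap_smul (FractionRing (WittVector p 𝔽)), hΦsemi, hfr,
          RingEquiv.apply_symm_apply, algebraMap_smul]
    intro x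
    constructor
    · intro h
      obtain ⟨y, hy, hyx⟩ := key _ h
      rwa [← Φ.injective hyx]
    · intro h
      rw [hN]
      exact Submodule.subset_span ⟨x, h, rfl⟩
  obtain ⟨-, hLself, hcov⟩ := hL
  rw [← hN] at hcov
  have hdual : ∀ (M : Submodule (WittVector p 𝔽) V) (x : V), x ∈ dualLattice p 𝔽 Q M ↔
      ∀ y ∈ M, ∃ r : WittVector p 𝔽,
        algebraMap _ (FractionRing (WittVector p 𝔽)) r = polar Q x y := by
    intro M x
    simp only [dualLattice, LinearMap.BilinForm.mem_dualSubmodule, Submodule.mem_one,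
      polarBilin_apply_apply]
  have hLd : ∀ x, x ∈ L ↔ ∀ y ∈ L, ∃ r : WittVector p 𝔽,
      algebraMap _ (FractionRing (WittVector p 𝔽)) r = polar Q x y := by
    intro x
    rw [← hdual, hLself]
  have hNd : ∀ x, x ∈ N ↔ ∀ y ∈ N, ∃ r : WittVector p 𝔽,
      algebraMap _ (FractionRing (WittVector p 𝔽)) r = polar Q x y := by
    intro x
    obtain ⟨x, rfl⟩ := Φ.surjective x
    rw [hNmem, hLd, Φ.surjective.forall (p := fun y => y ∈ N → ∃ r : WittVector p 𝔽,
      algebraMap _ (FractionRing (WittVector p 𝔽)) r = polar Q (Φ x) y)]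
    refine forall_congr' fun y => ?_
    rw [hNmem, hpolΦ, hint]
  have hirr := WittVector.irreducible p (k := 𝔽)
  have hmax : IsLocalRing.maximalIdeal (WittVector p 𝔽) = Ideal.span {(p : WittVector p 𝔽)} :=
    (IsDiscreteValuationRing.irreducible_iff_uniformizer _).1 hirr
  have hdiv : ∀ r : WittVector p 𝔽, (p : WittVector p 𝔽) ∣ r ∨ IsUnit r := by
    intro r
    rw [or_iff_not_imp_right]
    intro h
    rw [← Ideal.mem_span_singleton, ← hmax]
    exact h
  have hone : ∀ c : WittVector p 𝔽, IsUnit (1 - c * (p : WittVector p 𝔽)) := by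
    intro c
    refine (hdiv _).resolve_left fun h => hirr.not_isUnit (isUnit_of_dvd_one ?_)
    have := dvd_add h (dvd_mul_left (p : WittVector p 𝔽) c)
    simpa using this
  have h2 : IsUnit (2 : WittVector p 𝔽) := by
    refine (hdiv _).resolve_left fun h => ?_
    have hodd : Odd p := (Fact.out : p.Prime).odd_of_ne_two hp
    obtain ⟨k, hk⟩ := hodd
    refine hirr.not_isUnit (isUnit_of_dvd_one ?_)
    have h1 : (1 : WittVector p 𝔽) = (p : WittVector p 𝔽) - 2 * (k : WittVector p 𝔽) := by
      have : (p : WittVector p 𝔽) = 2 * (k : WittVector p 𝔽) + 1 := by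
        exact_mod_cast congrArg (Nat.cast : ℕ → WittVector p 𝔽) hk
      rw [this]; ring
    rw [h1]
    exact dvd_sub dvd_rfl (h.mul_right _)
  obtain ⟨c1, c2, c3, c4, c5⟩ := core_aux (K := FractionRing (WittVector p 𝔽))
    (p : WittVector p 𝔽) hirr.ne_zero hdiv hone h2 Q L N hLd hNd hcov
  have hpNmem : ∀ x, x ∈ pN ↔ ∃ w ∈ N, (p : WittVector p 𝔽) • w = x := by
    intro x
    rw [hpN]
    simp [Submodule.mem_map]
  have hH : H' = L ⊓ N := by
    rw [hH', sup_eq_left]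
    intro x hx
    obtain ⟨w, hw, rfl⟩ := (hpNmem x).1 hx
    exact c1 w hw
  have hMem : ∀ z, MemPW p 𝔽 z ↔ ∃ c : WittVector p 𝔽,
      z = algebraMap _ (FractionRing (WittVector p 𝔽)) (p : WittVector p 𝔽) *
        algebraMap _ (FractionRing (WittVector p 𝔽)) c := by
    intro z
    simp only [MemPW, map_natCast]
  rw [hH]
  simp only [hMem, hpNmem, Submodule.mem_one]
  refine ⟨c1, ?_, c2, c3, c4, c5⟩
  ext x
  rw [hdual, ← hNd]
end
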